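/- arXiv:2106.04049 — 2 statements merged into one kernel-verified Lean document; each statement's English description precedes it below -/
import Mathlib

section
/- There is an absolute constant C₀ ≥ 1 such that for every C ≥ C₀ the following holds: if p is an odd prime with p > C^{1/2} and m = ⌈C·log p⌉, then the number of vectors b ∈ F_p^m with disc_{F_p}(b) > C/p² is at most (8·C^{−1/2}·p)^m. -/
open Finset Matrix

noncomputable section

/-- The sign `±1` associated to a Boolean. -/
def signb (R : Type*) [Ring R] (b : Bool) : R := if b then 1 else -1

open Classical in
/-- Uniform/counting probability of an event on a finite sample space. -/
def prob {Ω : Type*} [Fintype Ω] (E : Ω → Prop) : ℝ :=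
  ((Finset.univ.filter E).card : ℝ) / (Fintype.card Ω : ℝ)

/-- The symmetric random sign matrix determined by the Boolean data `ω`
(only the entries `ω i j` with `i ≤ j` are used); it is uniformly distributed
over symmetric `±1` matrices when `ω` is uniform. -/
def symMat (R : Type*) [Ring R] {n : ℕ} (ω : Fin n → Fin n → Bool) :
    Matrix (Fin n) (Fin n) R :=
  Matrix.of fun i j => signb R (ω (min i j) (max i j))

/-- Atom probability of a vector over `ZMod p` w.r.t. i.i.d. Rademacher signs. -/
def rho (p : ℕ) {ι : Type*} [Fintype ι] [DecidableEq ι] (w : ι → ZMod p) : ℝ :=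
  ⨆ r : ZMod p, prob (fun ξ : ι → Bool => ∑ i, signb (ZMod p) (ξ i) * w i = r)

/-- Discrepancy of a vector over `ZMod p` w.r.t. i.i.d. Rademacher signs. -/
def disc (p : ℕ) {ι : Type*} [Fintype ι] [DecidableEq ι] (w : ι → ZMod p) : ℝ :=
  ⨆ x : ZMod p,
    |prob (fun ξ : ι → Bool => ∑ i, signb (ZMod p) (ξ i) * w i = x) - 1 / (p : ℝ)|

/-!
Fourier inversion bounds the discrepancy of `w` by the average over `t` of `∏ i, |cos (2πtwᵢ/p)|`
(omitting `t = 0`), and `|cos (πx/p)| ≤ exp (-2x²/p²)` when `|x| ≤ p/2`. A discrepancy above `1/p²`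
thus forces some dilate `2tw`, `t ≠ 0`, to lift to an integer vector of squared length less than
`p² log p`. An exponential Markov inequality, with the partition function compared to a Gaussian
integral, bounds the number of such vectors in each dilate by about `(6p/√C)^m`. The union over
the dilates costs a factor `p`, which is at most `(4/3)^m` because `log p ≤ m/C`.
-/

open Real ZMod
open scoped BigOperators

section CharacterSums

variable {ι R M : Type*} [Fintype ι]

lemma addChar_map_sum_eq_prod [AddCommMonoid R] [CommMonoid M] (ψ : AddChar R M) (f : ι → R) :
    ψ (∑ i, f i) = ∏ i, ψ (f i) :=
  map_sum ψ.toAddMonoidHom f univ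

lemma sum_addChar_signed_sum [DecidableEq ι] [Ring R] [CommSemiring M] (ψ : AddChar R M)
    (w : ι → R) :
    ∑ ξ : ι → Bool, ψ (∑ i, signb R (ξ i) * w i) = ∏ i, (ψ (w i) + ψ (-w i)) := by
  calc ∑ ξ : ι → Bool, ψ (∑ i, signb R (ξ i) * w i)
      = ∑ ξ : ι → Bool, ∏ i, ψ (signb R (ξ i) * w i) := by
        simp only [addChar_map_sum_eq_prod]
    _ = ∏ i, ∑ b : Bool, ψ (signb R b * w i) := by
        rw [prod_univ_sum, Fintype.piFinset_univ]
    _ = ∏ i, (ψ (w i) + ψ (-w i)) := by simp [signb]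

end CharacterSums

section FourierInversion

variable {Ω : Type*} [Fintype Ω] {N : ℕ} [NeZero N]

lemma natCast_mul_prob_eq (f : Ω → ZMod N) (x : ZMod N) :
    (N * prob (fun ω ↦ f ω = x) : ℂ) = ∑ t : ZMod N, 𝔼 ω, stdAddChar (t * (f ω - x)) := by
  classical
  rw [← expect_sum_comm]
  simp only [AddChar.sum_mulShift _ (isPrimitive_stdAddChar N), sub_eq_zero, ZMod.card,
    Nat.cast_ite, Nat.cast_zero]
  rw [Fintype.expect_eq_sum_div_card, ← sum_filter, sum_const, nsmul_eq_mul, prob]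
  push_cast
  rw [mul_div_assoc', mul_comm]
  congr!

lemma norm_expect_stdAddChar_mul_sub (f : Ω → ZMod N) (t x : ZMod N) :
    ‖𝔼 ω, stdAddChar (t * (f ω - x))‖ = ‖𝔼 ω, stdAddChar (t * f ω)‖ := by
  simp only [mul_sub, AddChar.map_sub_eq_div, ← expect_div, norm_div, AddChar.norm_apply, div_one]

lemma abs_prob_sub_le [Nonempty Ω] (f : Ω → ZMod N) (x : ZMod N) :
    |prob (fun ω ↦ f ω = x) - 1 / N| ≤
      1 / N * ∑ t ∈ ({0}ᶜ : Finset (ZMod N)), ‖𝔼 ω, stdAddChar (t * f ω)‖ := by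
  have hN : (N : ℂ) ≠ 0 := NeZero.ne _
  have hzero : 𝔼 ω, stdAddChar (0 * (f ω - x)) = (1 : ℂ) := by
    simp only [zero_mul, AddChar.map_zero_eq_one, Fintype.expect_one]
  have hinv : ((prob (fun ω ↦ f ω = x) - 1 / N : ℝ) : ℂ) =
      1 / N * ∑ t ∈ ({0}ᶜ : Finset (ZMod N)), 𝔼 ω, stdAddChar (t * (f ω - x)) := by
    have hsum := natCast_mul_prob_eq f x
    rw [Fintype.sum_eq_add_sum_compl 0, hzero] at hsum
    push_cast
    field_simp
    linear_combination hsum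
  rw [← Real.norm_eq_abs, ← Complex.norm_real, hinv, norm_mul, norm_div, norm_one,
    Complex.norm_natCast]
  gcongr
  exact norm_sum_le_of_le _ fun t _ ↦ (norm_expect_stdAddChar_mul_sub f t x).le

end FourierInversion

section GaussianDecay

lemma norm_exp_I_mul_ofReal_add_one (x : ℝ) :
    ‖Complex.exp (Complex.I * x) + 1‖ = 2 * |cos (x / 2)| := by
  have hshift : Complex.exp (Complex.I * x) + 1 = -(Complex.exp (Complex.I * (x + π : ℝ)) - 1) := by
    rw [Complex.ofReal_add, mul_add, Complex.exp_add, mul_comm _ (π : ℂ), Complex.exp_pi_mul_I]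
    ring
  rw [hshift, norm_neg, Complex.norm_exp_I_mul_ofReal_sub_one, add_div, sin_add_pi_div_two,
    norm_mul, Real.norm_ofNat, Real.norm_eq_abs]

lemma abs_cos_pi_mul_le_exp {x : ℝ} (hx : |x| ≤ 1 / 2) : |cos (π * x)| ≤ exp (-2 * x ^ 2) := by
  have habs : |π * x| ≤ π / 2 := by
    rw [abs_mul, abs_of_pos pi_pos]
    nlinarith [pi_pos]
  obtain ⟨hlower, hupper⟩ := abs_le.mp habs
  have hcos : 0 ≤ cos (π * x) := cos_nonneg_of_neg_pi_div_two_le_of_le (by linarith) hupper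
  calc |cos (π * x)| = cos (π * x) := abs_of_nonneg hcos
    _ ≤ 1 - 2 / π ^ 2 * (π * x) ^ 2 := cos_le_one_sub_mul_cos_sq (habs.trans (by linarith [pi_pos]))
    _ = -2 * x ^ 2 + 1 := by field
    _ ≤ exp (-2 * x ^ 2) := add_one_le_exp _

variable {N : ℕ} [NeZero N]

lemma abs_valMinAbs_div_le (z : ZMod N) : |(z.valMinAbs : ℝ) / N| ≤ 1 / 2 := by
  have hz : 2 * |z.valMinAbs| ≤ N := by
    have := z.natAbs_valMinAbs_le
    rw [Int.abs_eq_natAbs]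
    omega
  have hzR : 2 * |(z.valMinAbs : ℝ)| ≤ N := by exact_mod_cast hz
  rw [abs_div, Nat.abs_cast, div_le_iff₀ (by exact_mod_cast NeZero.pos N)]
  linarith

lemma norm_stdAddChar_add_one_le (z : ZMod N) :
    ‖stdAddChar z + 1‖ ≤ 2 * exp (-2 * (z.valMinAbs / N) ^ 2) := by
  have harg : stdAddChar z = Complex.exp (Complex.I * (2 * (π * (z.valMinAbs / N)) : ℝ)) := by
    conv_lhs => rw [← z.coe_valMinAbs, stdAddChar_coe]
    push_cast
    ring_nf
  rw [harg, norm_exp_I_mul_ofReal_add_one, mul_div_cancel_left₀ _ two_ne_zero]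
  gcongr
  exact abs_cos_pi_mul_le_exp (abs_valMinAbs_div_le z)

lemma norm_stdAddChar_add_stdAddChar_neg_le (z : ZMod N) :
    ‖stdAddChar z + stdAddChar (-z)‖ ≤ 2 * exp (-2 * ((2 * z).valMinAbs / N) ^ 2) := by
  have hfactor : stdAddChar z + stdAddChar (-z) = stdAddChar (-z) * (stdAddChar (2 * z) + 1) := by
    rw [mul_add, ← AddChar.map_add_eq_mul, mul_one, two_mul, neg_add_cancel_left]
  rw [hfactor, norm_mul, AddChar.norm_apply, one_mul]
  exact norm_stdAddChar_add_one_le (2 * z)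

end GaussianDecay

section Discrepancy

variable {ι : Type*} [Fintype ι] {N : ℕ}

/-- The squared Euclidean length of the shortest lift of `v : ι → ℤ/Nℤ` to `ι → ℤ`. The larger
it is for `2tw`, the smaller the characteristic function of `∑ i, ξᵢwᵢ` at `t`. -/
def sqLiftLength (v : ι → ZMod N) : ℝ :=
  ∑ i, ((v i).valMinAbs : ℝ) ^ 2

lemma ncard_smul_sqLiftLength_lt {c : ZMod N} (hc : IsUnit c) (r : ℝ) :
    {w : ι → ZMod N | sqLiftLength (c • w) < r}.ncard =
      {v : ι → ZMod N | sqLiftLength v < r}.ncard :=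
  have hbij : Function.Bijective fun w : ι → ZMod N ↦ c • w := hc.smul_bijective
  Set.ncard_preimage_of_injective_subset_range (s := {v | sqLiftLength v < r}) hbij.injective
    (by simp [hbij.surjective.range_eq])

variable [DecidableEq ι] [NeZero N]

lemma norm_expect_stdAddChar_signed_sum_le (w : ι → ZMod N) (t : ZMod N) :
    ‖𝔼 ξ : ι → Bool, stdAddChar (t * ∑ i, signb (ZMod N) (ξ i) * w i)‖ ≤
      exp (-2 * sqLiftLength ((2 * t) • w) / N ^ 2) := by
  have hprod : ∑ ξ : ι → Bool, stdAddChar (t * ∑ i, signb (ZMod N) (ξ i) * w i) =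
      ∏ i, (stdAddChar (t * w i) + stdAddChar (-(t * w i))) := by
    simp only [← sum_addChar_signed_sum, mul_sum, mul_left_comm]
  rw [Fintype.expect_eq_sum_div_card, hprod, norm_div, norm_prod, Complex.norm_natCast,
    div_le_iff₀ (by simp), mul_comm]
  calc ∏ i, ‖stdAddChar (t * w i) + stdAddChar (-(t * w i))‖
      ≤ ∏ i, 2 * exp (-2 * ((2 * (t * w i)).valMinAbs / N) ^ 2) := by
        gcongr
        exact norm_stdAddChar_add_stdAddChar_neg_le _
    _ = Fintype.card (ι → Bool) * exp (-2 * sqLiftLength ((2 * t) • w) / N ^ 2) := by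
        simp only [prod_mul_distrib, prod_const, card_univ, ← exp_sum, sqLiftLength, Pi.smul_apply,
          smul_eq_mul, mul_sum, sum_div, div_pow, mul_div_assoc, mul_assoc, Fintype.card_fun,
          Fintype.card_bool, Nat.cast_pow, Nat.cast_ofNat]

lemma disc_le_sum_exp (w : ι → ZMod N) :
    disc N w ≤
      1 / N * ∑ t ∈ ({0}ᶜ : Finset (ZMod N)), exp (-2 * sqLiftLength ((2 * t) • w) / N ^ 2) := by
  refine ciSup_le fun x ↦ (abs_prob_sub_le _ x).trans ?_
  gcongr with t
  exact norm_expect_stdAddChar_signed_sum_le w t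

lemma exists_sqLiftLength_lt_of_exp_lt_disc {w : ι → ZMod N} {r : ℝ}
    (hw : exp (-2 * r / N ^ 2) < disc N w) :
    ∃ t : ZMod N, t ≠ 0 ∧ sqLiftLength ((2 * t) • w) < r := by
  by_contra! hlong
  have hN : (0 : ℝ) < N := by exact_mod_cast NeZero.pos N
  refine hw.not_ge ((disc_le_sum_exp w).trans ?_)
  calc 1 / N * ∑ t ∈ ({0}ᶜ : Finset (ZMod N)), exp (-2 * sqLiftLength ((2 * t) • w) / N ^ 2)
      ≤ 1 / N * ∑ t ∈ ({0}ᶜ : Finset (ZMod N)), exp (-2 * r / N ^ 2) := by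
        gcongr 1 / N * ∑ t ∈ _, exp (?_ / N ^ 2) with t ht
        linarith [hlong t (by simpa using ht)]
    _ ≤ 1 / N * ∑ _t : ZMod N, exp (-2 * r / N ^ 2) := by
        gcongr
        exact subset_univ _
    _ = exp (-2 * r / N ^ 2) := by
        rw [sum_const, card_univ, ZMod.card, nsmul_eq_mul, one_div_mul_eq_div,
          mul_div_cancel_left₀ _ hN.ne']

end Discrepancy

section ShortVectors

variable {a : ℝ}

lemma sum_range_exp_neg_mul_sq_le (ha : 0 < a) (n : ℕ) :
    ∑ k ∈ range n, exp (-a * ((k + 1 : ℕ) : ℝ) ^ 2) ≤ √(π / a) / 2 := by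
  rw [← integral_gaussian_Ioi]
  refine AntitoneOn.sum_range_le_integral (f := fun x ↦ exp (-a * x ^ 2)) ?_
    (integrable_exp_neg_mul_sq ha).integrableOn fun _ _ ↦ (exp_pos _).le
  intro x hx y _ hxy
  have hsq : x ^ 2 ≤ y ^ 2 := pow_le_pow_left₀ hx.1 hxy 2
  exact exp_le_exp.mpr (by nlinarith)

lemma sum_Icc_exp_neg_mul_sq_le (ha : 0 < a) (n : ℕ) :
    ∑ k ∈ Icc (-n : ℤ) n, exp (-a * (k : ℝ) ^ 2) ≤ 1 + √(π / a) := by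
  have heven : Function.Even fun k : ℤ ↦ exp (-a * (k : ℝ) ^ 2) := fun k ↦ by simp
  rw [sum_Icc_of_even_eq_range heven, sum_range_succ']
  have hpos := sum_range_exp_neg_mul_sq_le ha n
  simp only [nsmul_eq_mul, Nat.cast_ofNat, Int.cast_natCast, Int.cast_zero, Nat.cast_zero, ne_eq,
    OfNat.ofNat_ne_zero, not_false_eq_true, zero_pow, mul_zero, exp_zero]
  linarith

variable {N : ℕ} [NeZero N]

lemma sum_exp_neg_mul_valMinAbs_sq_le (ha : 0 < a) :
    ∑ z : ZMod N, exp (-a * (z.valMinAbs : ℝ) ^ 2) ≤ 1 + √(π / a) := by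
  classical
  calc ∑ z : ZMod N, exp (-a * (z.valMinAbs : ℝ) ^ 2)
      = ∑ k ∈ univ.image (valMinAbs : ZMod N → ℤ), exp (-a * (k : ℝ) ^ 2) :=
        (sum_image (f := fun k : ℤ ↦ exp (-a * (k : ℝ) ^ 2)) injective_valMinAbs.injOn).symm
    _ ≤ ∑ k ∈ Icc (-N : ℤ) N, exp (-a * (k : ℝ) ^ 2) := by
        refine sum_le_sum_of_subset_of_nonneg (image_subset_iff.mpr fun z _ ↦ ?_)
          fun _ _ _ ↦ (exp_pos _).le
        have := z.natAbs_valMinAbs_le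
        rw [mem_Icc]
        omega
    _ ≤ 1 + √(π / a) := sum_Icc_exp_neg_mul_sq_le ha N

variable {ι : Type*} [Fintype ι]

lemma sum_exp_neg_mul_sqLiftLength_le (ha : 0 < a) [DecidableEq ι] :
    ∑ v : ι → ZMod N, exp (-a * sqLiftLength v) ≤ (1 + √(π / a)) ^ Fintype.card ι := by
  calc ∑ v : ι → ZMod N, exp (-a * sqLiftLength v)
      = ∏ _i : ι, ∑ z : ZMod N, exp (-a * (z.valMinAbs : ℝ) ^ 2) := by
        simp only [prod_univ_sum, Fintype.piFinset_univ, sqLiftLength, mul_sum, exp_sum]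
    _ ≤ (1 + √(π / a)) ^ Fintype.card ι := by
        rw [prod_const, card_univ]
        gcongr
        exact sum_exp_neg_mul_valMinAbs_sq_le ha

lemma ncard_sqLiftLength_lt_le (ha : 0 < a) (r : ℝ) :
    ({v : ι → ZMod N | sqLiftLength v < r}.ncard : ℝ) ≤
      exp (a * r) * (1 + √(π / a)) ^ Fintype.card ι := by
  classical
  calc ({v : ι → ZMod N | sqLiftLength v < r}.ncard : ℝ)
      = ∑ v : ι → ZMod N with sqLiftLength v < r, 1 := by
        rw [Set.ncard_eq_toFinset_card', Set.toFinset_ofPred, sum_const, nsmul_one]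
    _ ≤ ∑ v : ι → ZMod N with sqLiftLength v < r, exp (a * r) * exp (-a * sqLiftLength v) := by
        gcongr with v hv
        rw [← exp_add]
        have := (mem_filter.mp hv).2
        exact one_le_exp (by nlinarith)
    _ ≤ ∑ v : ι → ZMod N, exp (a * r) * exp (-a * sqLiftLength v) := by
        gcongr
        exact filter_subset _ _
    _ ≤ exp (a * r) * (1 + √(π / a)) ^ Fintype.card ι := by
        rw [← mul_sum]
        gcongr
        exact sum_exp_neg_mul_sqLiftLength_le ha

end ShortVectors

section Counting

variable {ι : Type*} [Fintype ι] [DecidableEq ι] {p : ℕ}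

lemma ncard_exp_lt_disc_le [Fact p.Prime] (hp2 : p ≠ 2) {a : ℝ} (ha : 0 < a) (r : ℝ) :
    ({w : ι → ZMod p | exp (-2 * r / p ^ 2) < disc p w}.ncard : ℝ) ≤
      p * (exp (a * r) * (1 + √(π / a)) ^ Fintype.card ι) := by
  have h2 : (2 : ZMod p) ≠ 0 := Ring.two_ne_zero (by rwa [ZMod.ringChar_zmod_n])
  let dilate (t : ZMod p) : Set (ι → ZMod p) := {w | sqLiftLength ((2 * t) • w) < r}
  have hcover : {w : ι → ZMod p | exp (-2 * r / p ^ 2) < disc p w} ⊆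
      ⋃ t ∈ ({0}ᶜ : Finset (ZMod p)), dilate t := fun w hw ↦ by
    obtain ⟨t, ht, hshort⟩ := exists_sqLiftLength_lt_of_exp_lt_disc hw
    exact Set.mem_biUnion (by simpa using ht) hshort
  have hdilate : ∀ t ∈ ({0}ᶜ : Finset (ZMod p)),
      ((dilate t).ncard : ℝ) ≤ exp (a * r) * (1 + √(π / a)) ^ Fintype.card ι := fun t ht ↦ by
    have h2t : IsUnit (2 * t) := (mul_ne_zero h2 (by simpa using ht)).isUnit
    rw [ncard_smul_sqLiftLength_lt h2t]
    exact ncard_sqLiftLength_lt_le ha r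
  calc ({w : ι → ZMod p | exp (-2 * r / p ^ 2) < disc p w}.ncard : ℝ)
      ≤ ∑ t ∈ ({0}ᶜ : Finset (ZMod p)), ((dilate t).ncard : ℝ) := by
        exact_mod_cast (Set.ncard_le_ncard hcover).trans (set_ncard_biUnion_le _ _)
    _ ≤ ∑ _t ∈ ({0}ᶜ : Finset (ZMod p)), exp (a * r) * (1 + √(π / a)) ^ Fintype.card ι :=
        sum_le_sum hdilate
    _ ≤ ∑ _t : ZMod p, exp (a * r) * (1 + √(π / a)) ^ Fintype.card ι := by
        gcongr
        exact subset_univ _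
    _ = p * (exp (a * r) * (1 + √(π / a)) ^ Fintype.card ι) := by
        rw [sum_const, card_univ, ZMod.card, nsmul_eq_mul]

lemma ncard_one_div_sq_lt_disc_le [Fact p.Prime] (hp2 : p ≠ 2) {C : ℝ} (hC : 0 < C)
    (hCp : √C ≤ p) (hι : C * log p ≤ Fintype.card ι) :
    ({w : ι → ZMod p | 1 / (p : ℝ) ^ 2 < disc p w}.ncard : ℝ) ≤
      p * (exp (1 / 2) * (1 + √(2 * π)) * (p / √C)) ^ Fintype.card ι := by
  have hp0 : (0 : ℝ) < p := by exact_mod_cast (Fact.out : p.Prime).pos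
  have hthreshold : exp (-2 * (p ^ 2 * log p) / p ^ 2) = 1 / (p : ℝ) ^ 2 := by
    rw [mul_left_comm, mul_div_cancel_left₀ _ (by positivity), neg_mul, exp_neg, ← Nat.cast_ofNat,
      exp_nat_mul, exp_log hp0, one_div]
  have hone : 1 ≤ p / √C := (one_le_div (by positivity)).mpr hCp
  have hexponent : C / (2 * p ^ 2) * (p ^ 2 * log p) ≤ Fintype.card ι * (1 / 2 : ℝ) := by
    field_simp
    exact hι
  have hgauss : √(π / (C / (2 * p ^ 2))) = √(2 * π) * (p / √C) := by
    rw [← sqrt_sq hp0.le, ← sqrt_div (by positivity), ← sqrt_mul (by positivity), sqrt_sq hp0.le]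
    field_simp
  calc ({w : ι → ZMod p | 1 / (p : ℝ) ^ 2 < disc p w}.ncard : ℝ)
      ≤ p * (exp (C / (2 * p ^ 2) * (p ^ 2 * log p)) *
          (1 + √(π / (C / (2 * p ^ 2)))) ^ Fintype.card ι) := by
        rw [← hthreshold]
        exact ncard_exp_lt_disc_le hp2 (by positivity) _
    _ ≤ p * (exp (Fintype.card ι * (1 / 2)) *
          (p / √C + √(2 * π) * (p / √C)) ^ Fintype.card ι) := by
        rw [hgauss]
        gcongr
    _ = p * (exp (1 / 2) * (1 + √(2 * π)) * (p / √C)) ^ Fintype.card ι := by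
        rw [exp_nat_mul, ← mul_pow]
        ring

lemma le_pow_of_mul_log_le {x b C : ℝ} {n : ℕ} (hx : 1 ≤ x) (hb : 1 ≤ b) (hC : 1 ≤ C * log b)
    (hn : C * log x ≤ n) : x ≤ b ^ n := by
  rw [← log_le_log_iff (by positivity) (by positivity), log_pow]
  calc log x ≤ C * log b * log x := le_mul_of_one_le_left (log_nonneg hx) hC
    _ = C * log x * log b := by ring
    _ ≤ n * log b := mul_le_mul_of_nonneg_right hn (log_nonneg hb)

lemma exp_half_mul_one_add_sqrt_two_pi_le : exp (1 / 2) * (1 + √(2 * π)) ≤ 6 := by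
  have hexp : exp (1 / 2) ≤ 5 / 3 := by
    rw [exp_half]
    exact sqrt_le_iff.mpr ⟨by norm_num, by linarith [exp_one_lt_d9]⟩
  have hsqrt : √(2 * π) ≤ 13 / 5 := sqrt_le_iff.mpr ⟨by norm_num, by linarith [pi_lt_d2]⟩
  calc exp (1 / 2) * (1 + √(2 * π)) ≤ 5 / 3 * (1 + 13 / 5) := by gcongr
    _ = 6 := by norm_num

theorem count_large_disc_vectors_general {C : ℝ} (hC : 4 ≤ C) (hp : p.Prime)
    (hCp : C ^ ((1 : ℝ) / 2) < p) (hι : C * log p ≤ Fintype.card ι) :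
    ({w : ι → ZMod p | 1 / (p : ℝ) ^ 2 < disc p w}.ncard : ℝ) ≤
      (8 * C ^ (-(1 : ℝ) / 2) * p) ^ Fintype.card ι := by
  have : Fact p.Prime := ⟨hp⟩
  rw [← sqrt_eq_rpow] at hCp
  have htwo : (2 : ℝ) < p := (le_sqrt' two_pos |>.mpr (by linarith)).trans_lt hCp
  have hp2 : p ≠ 2 := by
    rintro rfl
    norm_num at htwo
  have hlog : 1 / 4 ≤ log (4 / 3) := by
    linarith [one_sub_inv_le_log_of_pos (show (0 : ℝ) < 4 / 3 by norm_num)]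
  calc ({w : ι → ZMod p | 1 / (p : ℝ) ^ 2 < disc p w}.ncard : ℝ)
      ≤ p * (exp (1 / 2) * (1 + √(2 * π)) * (p / √C)) ^ Fintype.card ι :=
        ncard_one_div_sq_lt_disc_le hp2 (by linarith) hCp.le hι
    _ ≤ (4 / 3) ^ Fintype.card ι * (6 * (p / √C)) ^ Fintype.card ι := by
        gcongr
        · exact le_pow_of_mul_log_le (by linarith) (by norm_num) (by nlinarith) hι
        · exact exp_half_mul_one_add_sqrt_two_pi_le
    _ = (8 * C ^ (-(1 : ℝ) / 2) * p) ^ Fintype.card ι := by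
        rw [neg_div, rpow_neg (by linarith), ← sqrt_eq_rpow, ← mul_pow]
        ring

end Counting

/-- Counting vectors with large discrepancy: for `C ≥ C₀`, odd primes `p > C^{1/2}`
and `m = ⌈C log p⌉`, the number of `b ∈ F_p^m` with `disc(b) > C/p²` is at most
`(8 C^{-1/2} p)^m`. -/
theorem count_large_disc_vectors :
    ∃ C₀ : ℝ, 1 ≤ C₀ ∧
      ∀ C : ℝ, C₀ ≤ C →
        ∀ p : ℕ, p.Prime → Odd p → C ^ ((1 : ℝ) / 2) < (p : ℝ) →
          ∀ m : ℕ, m = ⌈C * Real.log p⌉₊ →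
            ({b : Fin m → ZMod p | C / (p : ℝ) ^ 2 < disc p b}.ncard : ℝ)
              ≤ (8 * C ^ (-(1 : ℝ) / 2) * (p : ℝ)) ^ m := by
  refine ⟨4, by norm_num, fun C hC p hp _ hCp m hm ↦ ?_⟩
  have : NeZero p := ⟨hp.ne_zero⟩
  have hthreshold : 1 / (p : ℝ) ^ 2 ≤ C / p ^ 2 := by gcongr; linarith
  have hsubset : {b : Fin m → ZMod p | C / (p : ℝ) ^ 2 < disc p b} ⊆
      {b | 1 / (p : ℝ) ^ 2 < disc p b} := fun _ hb ↦ hthreshold.trans_lt hb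
  grw [Set.ncard_le_ncard hsubset]
  simpa using count_large_disc_vectors_general (ι := Fin m) hC hp hCp (by simp [hm, Nat.le_ceil])
end
end

section
/- There exist a constant c > 0 and a constant n₀ such that for all n ≥ n₀, the n×n random symmetric Rademacher matrix M_n has simple spectrum (i.e., its n real eigenvalues are pairwise distinct) with probability at least 1 − exp(−c·n^{1/2}·(log n)^{1/4}). -/
open Finset Matrix

noncomputable section

/-!
Write `M (m + 1)` as `M m` bordered by a random sign column `x`. Unless `x` is orthogonal to a whole
eigenspace of `M m`, every eigenvector of `M (m + 1)` with an eigenvalue of `M m` vanishes in its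
last coordinate, so an eigenspace of dimension `k ≥ 2` of `M (m + 1)` becomes a proper subspace of
an eigenspace of `M m`. Descending from dimension `n` to `n / 2`, a multiple eigenvalue would thus
produce an eigenspace too large for the matrix, so at some step `x` is orthogonal to one of the at
most `m` eigenspaces of `M m`. This has probability at most `m ε`, provided every eigenvector of
`M m` is orthogonal to a random sign vector with probability less than `ε`; here `ε = 2⁻ᴱ` with `E`
of order `n ^ (1 / 2) * (log n) ^ (1 / 4)`.

It remains to exclude eigenvectors with atom probability at least `2⁻ᴱ`. Those of small support are
handled by a union bound over supports. For the others, Fourier analysis and the Cauchy–Davenport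
theorem, applied modulo a large prime, show that making the signs lazy, nonzero with probability
`1 / (32 j³)`, raises the atom probability by a factor of order `j`. Intersecting greedily with
random hyperplanes whose normals are such lazy sign vectors produces a subspace `U` of dimension
`O(E)` such that the number of bad matrices is at most a sum over those whose eigenvector lies in
`U`: each of them counts with the product of the inverse atom probabilities of the initial segments
of its eigenvector, and the lazy steps save a factor `(5 / j) ^ (n / 8)`. Revealing the matrix row
by row, the mean of this product over the matrices `M` with an eigenvector `v` in `U` is at most
`((n + 1) 2ᴱ) ^ (2 dim U)`, since `(v, M v)` lies in `U × U` and each row either satisfies a linear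
constraint by chance, at the price of an atom probability, or lowers the dimension. With `j` of
order `n ^ (1 / 10)` the saving `exp (-c n log n)` beats this loss `exp (O(E²))`.
-/

open scoped BigOperators Pointwise

/-! ### Counting probabilities -/

section Prob

variable {Ω Ω' κ : Type*} [Fintype Ω] [Fintype Ω']

theorem prob_eq_expect (E : Ω → Prop) [DecidablePred E] :
    prob E = 𝔼 x, if E x then (1 : ℝ) else 0 := by
  rw [Fintype.expect_eq_sum_div_card, sum_boole, prob]
  congr!

theorem prob_nonneg (E : Ω → Prop) : 0 ≤ prob E := by
  unfold prob; positivity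

theorem prob_le_one (E : Ω → Prop) : prob E ≤ 1 := by
  unfold prob
  exact div_le_one_of_le₀ (mod_cast card_le_univ _) (by positivity)

theorem prob_pos {E : Ω → Prop} {x : Ω} (hx : E x) : 0 < prob E := by
  have : Nonempty Ω := ⟨x⟩
  exact div_pos (mod_cast card_pos.2 ⟨x, by simpa using hx⟩) (mod_cast Fintype.card_pos)

theorem prob_mono {E F : Ω → Prop} (h : ∀ x, E x → F x) : prob E ≤ prob F := by
  unfold prob
  gcongr with x
  exact h x

theorem prob_eq_zero {E : Ω → Prop} (h : ∀ x, ¬ E x) : prob E = 0 := by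
  simp [prob, h]

theorem prob_not [Nonempty Ω] (E : Ω → Prop) : prob (fun x => ¬ E x) = 1 - prob E := by
  classical
  rw [prob_eq_expect, prob_eq_expect, eq_sub_iff_add_eq, ← expect_add_distrib]
  have indicator_add (x : Ω) : ((if ¬ E x then 1 else 0) + if E x then 1 else 0 : ℝ) = 1 := by
    split_ifs <;> simp
  simp only [indicator_add]
  exact expect_const univ_nonempty 1

theorem prob_comp_equiv (e : Ω ≃ Ω') (E : Ω' → Prop) : prob (fun x => E (e x)) = prob E := by
  classical
  rw [prob_eq_expect, prob_eq_expect]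
  exact Fintype.expect_equiv e _ _ fun _ => rfl

theorem prob_or_le (E F : Ω → Prop) : prob (fun x => E x ∨ F x) ≤ prob E + prob F := by
  classical
  simp only [prob_eq_expect, ← expect_add_distrib]
  refine expect_le_expect fun x _ => ?_
  by_cases hE : E x <;> by_cases hF : F x <;> simp [hE, hF]

theorem prob_exists_mem_le (S : Finset κ) (E : κ → Ω → Prop) :
    prob (fun x => ∃ k ∈ S, E k x) ≤ ∑ k ∈ S, prob (E k) := by
  classical
  simp only [prob_eq_expect, ← expect_sum_comm]
  refine expect_le_expect fun x _ => ?_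
  have indicator_nonneg (k : κ) : 0 ≤ if E k x then (1 : ℝ) else 0 := by split_ifs <;> simp
  split_ifs with h
  · obtain ⟨k, hk, hE⟩ := h
    simpa [hE] using single_le_sum (fun k _ => indicator_nonneg k) hk
  · exact sum_nonneg fun k _ => indicator_nonneg k

theorem prob_fst [Nonempty Ω'] (E : Ω → Prop) : prob (fun z : Ω × Ω' => E z.1) = prob E := by
  classical
  rw [prob_eq_expect, prob_eq_expect, ← univ_product_univ, expect_product]
  exact expect_congr rfl fun x _ => expect_const univ_nonempty (if E x then (1 : ℝ) else 0)

theorem prob_prod_le_of_forall [Nonempty Ω] {E : Ω → Ω' → Prop} {δ : ℝ}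
    (h : ∀ x, prob (E x) ≤ δ) : prob (fun z : Ω × Ω' => E z.1 z.2) ≤ δ := by
  classical
  rw [prob_eq_expect, ← univ_product_univ, expect_product]
  calc 𝔼 x, 𝔼 y, (if E x y then (1 : ℝ) else 0)
      ≤ 𝔼 _x : Ω, δ := expect_le_expect fun x _ => by rw [← prob_eq_expect]; exact h x
    _ = δ := expect_const univ_nonempty δ

end Prob

/-! ### Cosines on `ZMod p` -/

section CosChar

variable {p : ℕ} [NeZero p]

/-- The cosine `x ↦ cos (2πx / p)` on `ZMod p`. -/
def cosChar (x : ZMod p) : ℝ := (ZMod.stdAddChar x).re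

theorem cosChar_zero : cosChar (0 : ZMod p) = 1 := by simp [cosChar]

theorem norm_stdAddChar (x : ZMod p) : ‖(ZMod.stdAddChar x : ℂ)‖ = 1 := AddChar.norm_apply _ _

theorem stdAddChar_re_sq_add_im_sq (x : ZMod p) :
    (ZMod.stdAddChar x : ℂ).re ^ 2 + (ZMod.stdAddChar x : ℂ).im ^ 2 = 1 := by
  rw [pow_two, pow_two, ← Complex.normSq_apply, Complex.normSq_eq_norm_sq, norm_stdAddChar,
    one_pow]

theorem abs_cosChar_le_one (x : ZMod p) : |cosChar x| ≤ 1 :=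
  (Complex.abs_re_le_norm _).trans_eq (norm_stdAddChar x)

theorem one_sub_cosChar_nonneg (x : ZMod p) : 0 ≤ 1 - cosChar x :=
  sub_nonneg.2 (abs_le.1 (abs_cosChar_le_one x)).2

theorem one_sub_cosChar_le_two (x : ZMod p) : 1 - cosChar x ≤ 2 := by
  linarith [(abs_le.1 (abs_cosChar_le_one x)).1]

theorem stdAddChar_add_stdAddChar_neg (x : ZMod p) :
    (ZMod.stdAddChar x : ℂ) + ZMod.stdAddChar (-x) = 2 * (cosChar x : ℂ) := by
  rw [AddChar.map_neg_eq_conj, Complex.add_conj]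
  simp [cosChar]

theorem cosChar_two_mul (x : ZMod p) : cosChar (2 * x) = 2 * cosChar x ^ 2 - 1 := by
  have h := stdAddChar_re_sq_add_im_sq x
  rw [cosChar, cosChar, two_mul, AddChar.map_add_eq_mul, Complex.mul_re]
  linarith

theorem abs_cosChar_le (x : ZMod p) : |cosChar x| ≤ 1 - 1 / 4 * (1 - cosChar (2 * x)) := by
  rw [cosChar_two_mul]
  nlinarith [sq_nonneg (|cosChar x| - 1), sq_abs (cosChar x)]

/-- Weighted triangle inequality for the squared distance `‖χ x - 1‖² = 2 (1 - cosChar x)`. -/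
theorem one_sub_cosChar_add_le (x y : ZMod p) {k : ℝ} (hk : 0 < k) :
    1 - cosChar (x + y) ≤ (1 + 1 / k) * (1 - cosChar x) + (1 + k) * (1 - cosChar y) := by
  have hx := stdAddChar_re_sq_add_im_sq x
  have hy := stdAddChar_re_sq_add_im_sq y
  unfold cosChar
  rw [AddChar.map_add_eq_mul, Complex.mul_re]
  generalize (ZMod.stdAddChar x : ℂ).re = a at *
  generalize (ZMod.stdAddChar x : ℂ).im = b at *
  generalize (ZMod.stdAddChar y : ℂ).re = c at *
  generalize (ZMod.stdAddChar y : ℂ).im = d at *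
  have defect_eq_sq : 2 * k * ((1 + 1 / k) * (1 - a) + (1 + k) * (1 - c) - (1 - (a * c - b * d)))
      = (1 - a - k * (a * (1 - c) + b * d)) ^ 2 + (-b - k * (b * (1 - c) - a * d)) ^ 2 := by
    have e : k * (1 / k) = 1 := by field_simp
    linear_combination (2 * (1 - a)) * e -
      (1 + k ^ 2 * ((1 - c) ^ 2 + d ^ 2) + 2 * k * (1 - c)) * hx
      - k ^ 2 * hy
  refine sub_nonneg.1 (nonneg_of_mul_nonneg_right ?_ (by positivity : 0 < 2 * k))
  rw [defect_eq_sq]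
  positivity

theorem expect_stdAddChar_mul (b : ZMod p) :
    𝔼 ξ : ZMod p, (ZMod.stdAddChar (ξ * b) : ℂ) = if b = 0 then 1 else 0 := by
  have hp : (p : ℂ) ≠ 0 := mod_cast NeZero.ne p
  rw [Fintype.expect_eq_sum_div_card, AddChar.sum_mulShift b (ZMod.isPrimitive_stdAddChar p)]
  split_ifs <;> simp [ZMod.card, hp]

theorem expect_cosChar_mul (b : ZMod p) :
    𝔼 ξ : ZMod p, cosChar (ξ * b) = if b = 0 then 1 else 0 := by
  have h := congrArg Complex.re (expect_stdAddChar_mul b)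
  rw [Fintype.expect_eq_sum_div_card, ZMod.card, Complex.div_natCast_re, Complex.re_sum] at h
  rw [Fintype.expect_eq_sum_div_card, ZMod.card]
  unfold cosChar
  rw [h]
  split_ifs <;> simp

theorem stdAddChar_sum {ι : Type*} (s : Finset ι) (g : ι → ZMod p) :
    (ZMod.stdAddChar (∑ i ∈ s, g i) : ℂ) = ∏ i ∈ s, (ZMod.stdAddChar (g i) : ℂ) := by
  classical
  induction s using Finset.induction_on with
  | empty => simp
  | insert a s ha ih => rw [sum_insert ha, prod_insert ha, AddChar.map_add_eq_mul, ih]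

end CosChar

/-! ### Lazy random sign vectors -/

section LazyWalk

variable {ι : Type*} [Fintype ι] {μ ν : ι → ℝ}

/-- The distribution of a lazy random sign with laziness parameter `μ`: it vanishes with
probability `1 - μ` and is otherwise uniform on `±1`. -/
def lazyWeight (μ : ℝ) (s : SignType) : ℝ := if s = 0 then 1 - μ else μ / 2

/-- The distribution of a vector of independent lazy signs, the `i`-th one with parameter
`μ i`. -/
def walkWeight (μ : ι → ℝ) (Y : ι → SignType) : ℝ := ∏ i, lazyWeight (μ i) (Y i)

/-- The real vector with the entries of `Y`. -/
def signVec (Y : ι → SignType) : ι → ℝ := fun i => Y i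

theorem sum_signType {M : Type*} [AddCommMonoid M] (f : SignType → M) :
    ∑ s, f s = f 0 + (f (-1) + f 1) := by
  rw [SignType.univ_eq, sum_insert (by decide), sum_insert (by decide), sum_singleton]

theorem lazyWeight_nonneg {μ : ℝ} (h0 : 0 ≤ μ) (h1 : μ ≤ 1) (s : SignType) :
    0 ≤ lazyWeight μ s := by
  unfold lazyWeight; split_ifs <;> linarith

theorem sum_lazyWeight (μ : ℝ) : ∑ s, lazyWeight μ s = 1 := by
  rw [sum_signType]; simp [lazyWeight]

theorem walkWeight_nonneg (h0 : ∀ i, 0 ≤ μ i) (h1 : ∀ i, μ i ≤ 1) (Y : ι → SignType) :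
    0 ≤ walkWeight μ Y :=
  prod_nonneg fun i _ => lazyWeight_nonneg (h0 i) (h1 i) _

variable [DecidableEq ι]

theorem sum_walkWeight (μ : ι → ℝ) : ∑ Y : ι → SignType, walkWeight μ Y = 1 := by
  unfold walkWeight
  rw [← Fintype.prod_sum]
  simp [sum_lazyWeight]

open Classical in
/-- The probability of an event under `walkWeight μ`. -/
def lazyProb (μ : ι → ℝ) (E : (ι → SignType) → Prop) : ℝ := ∑ Y with E Y, walkWeight μ Y

/-- The probability that a lazy random sign vector is orthogonal to `v`. -/
def zeroProb (μ v : ι → ℝ) : ℝ := lazyProb μ fun Y => signVec Y ⬝ᵥ v = 0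

theorem lazyProb_nonneg (h0 : ∀ i, 0 ≤ μ i) (h1 : ∀ i, μ i ≤ 1) (E : (ι → SignType) → Prop) :
    0 ≤ lazyProb μ E := by
  classical exact sum_nonneg fun Y _ => walkWeight_nonneg h0 h1 Y

theorem lazyProb_mono (h0 : ∀ i, 0 ≤ μ i) (h1 : ∀ i, μ i ≤ 1) {E F : (ι → SignType) → Prop}
    (h : ∀ Y, E Y → F Y) : lazyProb μ E ≤ lazyProb μ F := by
  classical
  exact sum_le_sum_of_subset_of_nonneg (monotone_filter_right _ fun Y _ => h Y)
    fun Y _ _ => walkWeight_nonneg h0 h1 Y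

theorem lazyProb_le_one (h0 : ∀ i, 0 ≤ μ i) (h1 : ∀ i, μ i ≤ 1) (E : (ι → SignType) → Prop) :
    lazyProb μ E ≤ 1 :=
  (lazyProb_mono h0 h1 (F := fun _ => True) fun _ _ => trivial).trans_eq
    (by simp [lazyProb, sum_walkWeight])

theorem prod_one_sub_le_lazyProb (h0 : ∀ i, 0 ≤ μ i) (h1 : ∀ i, μ i ≤ 1)
    {E : (ι → SignType) → Prop} (hE : E 0) : ∏ i, (1 - μ i) ≤ lazyProb μ E := by
  classical
  refine le_trans (le_of_eq ?_) (single_le_sum (fun Y _ => walkWeight_nonneg h0 h1 Y)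
    (mem_filter.2 ⟨mem_univ _, hE⟩))
  simp [walkWeight, lazyWeight]

theorem zeroProb_nonneg (h0 : ∀ i, 0 ≤ μ i) (h1 : ∀ i, μ i ≤ 1) (v : ι → ℝ) :
    0 ≤ zeroProb μ v :=
  lazyProb_nonneg h0 h1 _

theorem zeroProb_le_one (h0 : ∀ i, 0 ≤ μ i) (h1 : ∀ i, μ i ≤ 1) (v : ι → ℝ) :
    zeroProb μ v ≤ 1 :=
  lazyProb_le_one h0 h1 _

theorem prod_one_sub_le_zeroProb (h0 : ∀ i, 0 ≤ μ i) (h1 : ∀ i, μ i ≤ 1) (v : ι → ℝ) :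
    ∏ i, (1 - μ i) ≤ zeroProb μ v :=
  prod_one_sub_le_lazyProb h0 h1 (by simp [dotProduct, signVec])

end LazyWalk

section QuarterOn

variable {ι : Type*} [DecidableEq ι] (J : Finset ι)

/-- The laziness parameters `1/4` on `J` and `0` elsewhere. -/
def quarterOn : ι → ℝ := fun i => if i ∈ J then 1 / 4 else 0

theorem quarterOn_nonneg (i : ι) : 0 ≤ quarterOn J i := by
  unfold quarterOn; split_ifs <;> norm_num

theorem quarterOn_le (i : ι) : quarterOn J i ≤ 1 / 4 := by
  unfold quarterOn; split_ifs <;> norm_num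

end QuarterOn

/-! ### Fourier analysis of lazy walks -/

section WalkChar

variable {ι : Type*} [Fintype ι] {p : ℕ} [NeZero p] {μ ν : ι → ℝ}

/-- The characteristic function of the lazy walk `∑ i, Y i * w i` on `ZMod p`. -/
def walkChar (μ : ι → ℝ) (w : ι → ZMod p) (ξ : ZMod p) : ℝ :=
  ∏ i, (1 - μ i * (1 - cosChar (ξ * w i)))

theorem one_sub_mul_one_sub_cosChar_nonneg {a : ℝ} (ha : a ≤ 1 / 2) (x : ZMod p) :
    0 ≤ 1 - a * (1 - cosChar x) := by
  nlinarith [one_sub_cosChar_nonneg x, one_sub_cosChar_le_two x]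

theorem walkChar_nonneg (h : ∀ i, μ i ≤ 1 / 2) (w : ι → ZMod p) (ξ : ZMod p) :
    0 ≤ walkChar μ w ξ :=
  prod_nonneg fun i _ => one_sub_mul_one_sub_cosChar_nonneg (h i) _

theorem walkChar_anti (hνμ : ∀ i, ν i ≤ μ i) (hμ : ∀ i, μ i ≤ 1 / 2) (w : ι → ZMod p)
    (ξ : ZMod p) : walkChar μ w ξ ≤ walkChar ν w ξ :=
  prod_le_prod (fun i _ => one_sub_mul_one_sub_cosChar_nonneg (hμ i) _) fun i _ =>
    sub_le_sub_left (mul_le_mul_of_nonneg_right (hνμ i) (one_sub_cosChar_nonneg _)) _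

variable [DecidableEq ι]

theorem walkChar_eq_sum (μ : ι → ℝ) (w : ι → ZMod p) (ξ : ZMod p) :
    (walkChar μ w ξ : ℂ) = ∑ Y : ι → SignType,
      (walkWeight μ Y : ℂ) * ZMod.stdAddChar (ξ * ∑ i, (Y i : ℤ) • w i) := by
  have factor (i : ι) : ((1 - μ i * (1 - cosChar (ξ * w i)) : ℝ) : ℂ) =
      ∑ s : SignType, (lazyWeight (μ i) s : ℂ) * ZMod.stdAddChar (ξ * ((s : ℤ) • w i)) := by
    have h := stdAddChar_add_stdAddChar_neg (ξ * w i)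
    rw [sum_signType]
    simp only [lazyWeight, SignType.coe_zero, SignType.coe_neg_one, SignType.coe_one, zero_smul,
      neg_smul, one_smul, mul_zero, mul_neg, AddChar.map_zero_eq_one, if_true, reduceCtorEq,
      if_false]
    push_cast
    linear_combination -(μ i / 2 : ℂ) * h
  simp only [walkChar, Complex.ofReal_prod, factor, Fintype.prod_sum, prod_mul_distrib,
    walkWeight, mul_sum, stdAddChar_sum]

theorem lazyProb_sum_smul_eq_zero (μ : ι → ℝ) (w : ι → ZMod p) :
    lazyProb μ (fun Y => ∑ i, (Y i : ℤ) • w i = 0) = 𝔼 ξ, walkChar μ w ξ := by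
  classical
  apply Complex.ofReal_injective
  rw [lazyProb, sum_filter, Complex.ofReal_sum, Complex.ofReal_expect]
  simp_rw [walkChar_eq_sum]
  rw [expect_sum_comm]
  refine sum_congr rfl fun Y _ => ?_
  rw [← mul_expect, expect_stdAddChar_mul]
  split_ifs <;> simp

theorem walkChar_quarterOn (J : Finset ι) (w : ι → ZMod p) (ξ : ZMod p) :
    walkChar (quarterOn J) w ξ = ∏ i ∈ J, (1 - 1 / 4 * (1 - cosChar (ξ * w i))) := by
  rw [walkChar, ← prod_subset (subset_univ J) fun i _ hi => by simp [quarterOn, hi]]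
  exact prod_congr rfl fun i hi => by simp [quarterOn, hi]

theorem expect_stdAddChar_sum_signb (J : Finset ι) (w : ι → ZMod p) (ξ : ZMod p) :
    𝔼 x : ι → Bool, (ZMod.stdAddChar (ξ * ∑ i ∈ J, signb (ZMod p) (x i) * w i) : ℂ) =
      ∏ i ∈ J, (cosChar (ξ * w i) : ℂ) := by
  have pair_sum (i : ι) : ∑ b : Bool,
      (if i ∈ J then (ZMod.stdAddChar (ξ * (signb (ZMod p) b * w i)) : ℂ) else 1) =
        2 * if i ∈ J then (cosChar (ξ * w i) : ℂ) else 1 := by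
    split_ifs
    · simpa [signb] using stdAddChar_add_stdAddChar_neg (ξ * w i)
    · simp
  rw [Fintype.expect_eq_sum_div_card, div_eq_iff (by simp)]
  simp_rw [mul_sum, stdAddChar_sum, ← Fintype.prod_ite_mem J]
  rw [← Fintype.prod_sum fun i b =>
      if i ∈ J then (ZMod.stdAddChar (ξ * (signb (ZMod p) b * w i)) : ℂ) else 1,
    prod_congr rfl fun i _ => pair_sum i, prod_mul_distrib]
  simp [mul_comm]

/-- Replacing the frequency `ξ` by `2ξ` and using `|cos θ| ≤ 3/4 + cos (2θ) / 4`, the Rademacher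
characteristic function is dominated by a nonnegative lazy one. -/
theorem prob_sum_signb_le (hp : IsUnit (2 : ZMod p)) (J : Finset ι) (w : ι → ZMod p)
    (b : ZMod p) :
    prob (fun x : ι → Bool => ∑ i ∈ J, signb (ZMod p) (x i) * w i = b) ≤
      𝔼 ξ, walkChar (quarterOn J) w ξ := by
  have inversion :
      ((prob fun x : ι → Bool => ∑ i ∈ J, signb (ZMod p) (x i) * w i = b : ℝ) : ℂ) =
        𝔼 ξ : ZMod p, ZMod.stdAddChar (ξ * -b) * ∏ i ∈ J, (cosChar (ξ * w i) : ℂ) := by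
    rw [prob_eq_expect, Complex.ofReal_expect]
    simp_rw [← expect_stdAddChar_sum_signb, mul_expect]
    rw [expect_comm]
    refine expect_congr rfl fun x _ => ?_
    simp_rw [← AddChar.map_add_eq_mul, ← mul_add, expect_stdAddChar_mul, neg_add_eq_zero,
      eq_comm (a := b)]
    split_ifs <;> simp
  calc _ = ‖((prob fun x : ι → Bool => ∑ i ∈ J, signb (ZMod p) (x i) * w i = b : ℝ) : ℂ)‖ := by
        rw [Complex.norm_real, Real.norm_of_nonneg (prob_nonneg _)]
    _ ≤ 𝔼 ξ : ZMod p, ∏ i ∈ J, |cosChar (ξ * w i)| := by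
        rw [inversion]
        refine (RCLike.norm_expect_le (K := ℂ)).trans (expect_le_expect fun ξ _ => ?_)
        rw [norm_mul, norm_stdAddChar, one_mul, norm_prod]
        simp
    _ ≤ 𝔼 ξ : ZMod p, walkChar (quarterOn J) w (2 * ξ) := by
        refine expect_le_expect fun ξ _ => ?_
        rw [walkChar_quarterOn]
        refine prod_le_prod (fun _ _ => abs_nonneg _) fun i _ => ?_
        rw [mul_assoc]
        exact abs_cosChar_le _
    _ = 𝔼 ξ, walkChar (quarterOn J) w ξ :=
        Fintype.expect_equiv hp.unit.mulLeft _ _ fun _ => rfl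

end WalkChar

/-! ### Models modulo a prime -/

section ZModModel

variable {ι M : Type*} [Fintype ι] [AddCommGroup M] {p B : ℕ} {v : ι → M} {w : ι → ZMod p}

/-- The family `w` over `ZMod p` satisfies the same integer linear relations with coefficients
at most `B` as the family `v`. -/
def IsZModModel (B : ℕ) (v : ι → M) (w : ι → ZMod p) : Prop :=
  ∀ k : ι → ℤ, (∀ i, |k i| ≤ B) → (∑ i, k i • v i = 0 ↔ ∑ i, k i • w i = 0)

/-- A generic `ℚ`-linear functional separates the finitely many nonvanishing combinations from
zero, and clearing denominators makes its values integral. -/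
theorem exists_int_model [Module ℚ M] (v : ι → M) {K : Set (ι → ℤ)} (hK : K.Finite) :
    ∃ z : ι → ℤ, ∀ k ∈ K, (∑ i, k i • v i = 0 ↔ ∑ i, k i * z i = 0) := by
  have : Finite {k : ι → ℤ // k ∈ K ∧ ∑ i, k i • v i ≠ 0} := hK.subset fun k hk => hk.1
  obtain ⟨f, hf⟩ := Module.exists_dual_forall_apply_ne_zero (K := ℚ)
    (fun k : {k : ι → ℤ // k ∈ K ∧ ∑ i, k i • v i ≠ 0} => ∑ i, k.1 i • v i) fun k => k.2.2
  let N : ℕ := ∏ i, (f (v i)).den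
  have hN : (N : ℚ) ≠ 0 := mod_cast prod_ne_zero_iff.2 fun i _ => (f (v i)).den_nz
  have integral (i : ι) : ∃ z : ℤ, (z : ℚ) = N * f (v i) := by
    obtain ⟨m, hm⟩ : (f (v i)).den ∣ N := dvd_prod_of_mem _ (mem_univ i)
    refine ⟨m * (f (v i)).num, ?_⟩
    have hnum : ((f (v i)).num : ℚ) = f (v i) * (f (v i)).den := (Rat.mul_den_eq_num _).symm
    rw [hm]
    push_cast
    rw [hnum]
    ring
  choose z hz using integral
  refine ⟨z, fun k hk => ?_⟩
  have combination_eq : ((∑ i, k i * z i : ℤ) : ℚ) = N * f (∑ i, k i • v i) := by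
    push_cast
    rw [map_sum, mul_sum]
    exact sum_congr rfl fun i _ => by rw [hz, map_zsmul, zsmul_eq_mul]; ring
  have combination_eq_zero : ∑ i, k i * z i = 0 ↔ f (∑ i, k i • v i) = 0 := by
    rw [← Int.cast_eq_zero (α := ℚ), combination_eq, mul_eq_zero, or_iff_right hN]
  rw [combination_eq_zero]
  exact ⟨fun h => by rw [h, map_zero], fun h => by_contra fun hne => hf ⟨k, hk, hne⟩ h⟩

theorem exists_isZModModel [Module ℚ M] (B : ℕ) (v : ι → M) (N : ℕ) :
    ∃ p : ℕ, p.Prime ∧ N ≤ p ∧ ∃ w : ι → ZMod p, IsZModModel B v w := by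
  classical
  have hK : {k : ι → ℤ | ∀ i, |k i| ≤ B}.Finite :=
    (Set.Finite.pi' fun _ : ι => Set.finite_Icc (-B : ℤ) B).subset fun k hk i => abs_le.1 (hk i)
  obtain ⟨z, hz⟩ := exists_int_model v hK
  obtain ⟨p, hpN, hp⟩ := Nat.exists_infinite_primes (N + (∑ i, B * (z i).natAbs + 1))
  refine ⟨p, hp, by omega, fun i => (z i : ZMod p), fun k hk => ?_⟩
  have cast_combination : ∑ i, k i • (z i : ZMod p) = ((∑ i, k i * z i : ℤ) : ZMod p) := by
    simp
  rw [hz k hk, cast_combination, ZMod.intCast_zmod_eq_zero_iff_dvd _ p]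
  refine ⟨fun h => h ▸ dvd_zero _, fun h => Int.eq_zero_of_abs_lt_dvd h ?_⟩
  calc |∑ i, k i * z i| ≤ ∑ i, |k i * z i| := abs_sum_le_sum_abs _ _
    _ ≤ ∑ i, (B : ℤ) * |z i| := sum_le_sum fun i _ => by
        rw [abs_mul]; exact mul_le_mul_of_nonneg_right (hk i) (abs_nonneg _)
    _ = ((∑ i, B * (z i).natAbs : ℕ) : ℤ) := by push_cast; rfl
    _ < p := mod_cast by omega

theorem IsZModModel.eq_zero_iff (h : IsZModModel B v w) (hB : 1 ≤ B) (i : ι) :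
    v i = 0 ↔ w i = 0 := by
  classical
  have := h (Pi.single i 1) fun j => by
    obtain rfl | hj := eq_or_ne j i
    · simpa using hB
    · simp [hj]
  simpa [Pi.single_apply, ite_smul] using this

end ZModModel

section RealModel

variable {ι : Type*} [Fintype ι] {p B : ℕ} {v : ι → ℝ} {w : ι → ZMod p}

theorem signVec_dotProduct (Y : ι → SignType) (v : ι → ℝ) :
    signVec Y ⬝ᵥ v = ∑ i, (Y i : ℤ) • v i := by
  refine sum_congr rfl fun i _ => ?_
  cases h : Y i <;> simp [signVec, h]

theorem IsZModModel.sum_signb_eq_iff (h : IsZModModel B v w) (hB : 2 ≤ B) (J : Finset ι)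
    (x y : ι → Bool) :
    ∑ i ∈ J, signb ℝ (x i) * v i = ∑ i ∈ J, signb ℝ (y i) * v i ↔
      ∑ i ∈ J, signb (ZMod p) (x i) * w i = ∑ i ∈ J, signb (ZMod p) (y i) * w i := by
  classical
  have bound (i : ι) : |if i ∈ J then signb ℤ (x i) - signb ℤ (y i) else 0| ≤ B := by
    refine le_trans ?_ (Nat.cast_le.2 hB)
    split_ifs
    · cases x i <;> cases y i <;> simp [signb]
    · simp
  have cast_signb (R : Type) [Ring R] (b : Bool) : ((signb ℤ b : ℤ) : R) = signb R b := by
    cases b <;> simp [signb]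
  have := h _ bound
  simp only [ite_smul, zero_smul, sum_ite_mem, univ_inter, zsmul_eq_mul, Int.cast_sub,
    cast_signb, sub_mul, sum_sub_distrib, sub_eq_zero] at this
  exact this

variable [DecidableEq ι] [NeZero p]

theorem IsZModModel.zeroProb_eq (h : IsZModModel B v w) (hB : 1 ≤ B) (μ : ι → ℝ) :
    zeroProb μ v = 𝔼 ξ, walkChar μ w ξ := by
  rw [← lazyProb_sum_smul_eq_zero]
  refine congrArg (lazyProb μ) (funext fun Y => ?_)
  rw [signVec_dotProduct, h]
  intro i
  refine le_trans ?_ (Nat.cast_le.2 hB)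
  cases Y i <;> simp

theorem IsZModModel.prob_sum_signb_le (h : IsZModModel B v w) (hB : 2 ≤ B)
    (hp : IsUnit (2 : ZMod p)) (J : Finset ι) (a : ℝ) :
    prob (fun x : ι → Bool => ∑ i ∈ J, signb ℝ (x i) * v i = a) ≤
      𝔼 ξ, walkChar (quarterOn J) w ξ := by
  by_cases hE : ∃ y : ι → Bool, ∑ i ∈ J, signb ℝ (y i) * v i = a
  · obtain ⟨y, rfl⟩ := hE
    simp_rw [h.sum_signb_eq_iff hB]
    exact _root_.prob_sum_signb_le hp J w _
  · rw [prob_eq_zero (not_exists.1 hE)]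
    exact expect_nonneg fun ξ _ =>
      walkChar_nonneg (fun i => (quarterOn_le J i).trans (by norm_num)) w ξ

end RealModel

/-! ### Comparison of atom probabilities -/

section ZeroProb

variable {ι : Type*} [Fintype ι] [DecidableEq ι]

theorem zeroProb_anti {μ ν : ι → ℝ} (hνμ : ∀ i, ν i ≤ μ i) (hμ : ∀ i, μ i ≤ 1 / 2)
    (v : ι → ℝ) : zeroProb μ v ≤ zeroProb ν v := by
  obtain ⟨p, hp, -, w, hw⟩ := exists_isZModModel 1 v 0
  have : NeZero p := ⟨hp.ne_zero⟩
  rw [hw.zeroProb_eq le_rfl, hw.zeroProb_eq le_rfl]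
  exact expect_le_expect fun ξ _ => walkChar_anti hνμ hμ w ξ

theorem zeroProb_quarterOn_anti {J J' : Finset ι} (h : J ⊆ J') (v : ι → ℝ) :
    zeroProb (quarterOn J') v ≤ zeroProb (quarterOn J) v := by
  refine zeroProb_anti (fun i => ?_) (fun i => (quarterOn_le J' i).trans (by norm_num)) v
  by_cases hi : i ∈ J
  · simp [quarterOn, hi, h hi]
  · simpa [quarterOn, hi] using quarterOn_nonneg J' i

theorem zeroProb_quarterOn_nonneg (J : Finset ι) (v : ι → ℝ) : 0 ≤ zeroProb (quarterOn J) v :=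
  zeroProb_nonneg (quarterOn_nonneg J) (fun i => (quarterOn_le J i).trans (by norm_num)) v

theorem prob_sum_signb_le_zeroProb (v : ι → ℝ) (J : Finset ι) (a : ℝ) :
    prob (fun x : ι → Bool => ∑ i ∈ J, signb ℝ (x i) * v i = a) ≤
      zeroProb (quarterOn J) v := by
  obtain ⟨p, hp, h3, w, hw⟩ := exists_isZModModel 2 v 3
  have : Fact p.Prime := ⟨hp⟩
  have two_isUnit : IsUnit (2 : ZMod p) :=
    IsUnit.mk0 _ fun h => by
      have := Nat.le_of_dvd two_pos ((ZMod.natCast_eq_zero_iff 2 p).1 (mod_cast h))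
      omega
  rw [hw.zeroProb_eq one_le_two]
  exact hw.prob_sum_signb_le le_rfl two_isUnit J a

/-- Choosing `J` at random turns laziness `1/4` on `J` into laziness `1/8` everywhere. -/
theorem sum_zeroProb_quarterOn (v : ι → ℝ) :
    ∑ J : Finset ι, zeroProb (quarterOn J) v =
      2 ^ Fintype.card ι * zeroProb (fun _ => 1 / 8) v := by
  obtain ⟨p, hp, -, w, hw⟩ := exists_isZModModel 1 v 0
  have : NeZero p := ⟨hp.ne_zero⟩
  simp_rw [hw.zeroProb_eq le_rfl]
  rw [← expect_sum_comm, mul_expect]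
  refine expect_congr rfl fun ξ _ => ?_
  calc ∑ J : Finset ι, walkChar (quarterOn J) w ξ
      = ∏ i, (1 - 1 / 4 * (1 - cosChar (ξ * w i)) + 1) := by
        simp [walkChar_quarterOn, prod_add]
    _ = ∏ i, 2 * (1 - 1 / 8 * (1 - cosChar (ξ * w i))) :=
        prod_congr rfl fun i _ => by ring
    _ = 2 ^ Fintype.card ι * walkChar (fun _ => 1 / 8) w ξ := by
        rw [prod_mul_distrib, prod_const, card_univ, walkChar]

theorem exists_zeroProb_add_compl_le (v : ι → ℝ) : ∃ J : Finset ι,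
    zeroProb (quarterOn J) v + zeroProb (quarterOn Jᶜ) v ≤ 2 * zeroProb (fun _ => 1 / 8) v := by
  have sum_compl : ∑ J : Finset ι, zeroProb (quarterOn Jᶜ) v =
      ∑ J : Finset ι, zeroProb (quarterOn J) v :=
    Fintype.sum_equiv compl_involutive.toPerm _ _ fun _ => rfl
  obtain ⟨J, -, hJ⟩ := exists_le_of_sum_le (s := (univ : Finset (Finset ι)))
    (f := fun J => zeroProb (quarterOn J) v + zeroProb (quarterOn Jᶜ) v)
    (g := fun _ => 2 * zeroProb (fun _ => 1 / 8) v) univ_nonempty <| le_of_eq <| by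
      rw [sum_add_distrib, sum_compl, sum_zeroProb_quarterOn, sum_const, card_univ,
        Fintype.card_finset, nsmul_eq_mul]
      push_cast
      ring
  exact ⟨J, hJ⟩

theorem exists_card_eq_half_zeroProb_le (v : ι → ℝ) : ∃ J : Finset ι,
    #J = Fintype.card ι / 2 ∧
      zeroProb (quarterOn J) v ≤ 2 * zeroProb (fun _ => 1 / 8) v := by
  obtain ⟨J, hJ⟩ := exists_zeroProb_add_compl_le v
  have small : ∃ J : Finset ι, #J ≤ Fintype.card ι / 2 ∧
      zeroProb (quarterOn J) v ≤ 2 * zeroProb (fun _ => 1 / 8) v := by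
    have := card_add_card_compl J
    rcases le_or_gt #J (Fintype.card ι / 2) with h | h
    · exact ⟨J, h, by linarith [zeroProb_quarterOn_nonneg Jᶜ v]⟩
    · exact ⟨Jᶜ, by omega, by linarith [zeroProb_quarterOn_nonneg J v]⟩
  obtain ⟨J, hcard, hJ⟩ := small
  obtain ⟨J', hJJ', -, hcard'⟩ := exists_subsuperset_card_eq (subset_univ J) hcard
    (by rw [card_univ]; omega)
  exact ⟨J', hcard', (zeroProb_quarterOn_anti hJJ' v).trans hJ⟩

theorem zeroProb_quarterOn_singleton {v : ι → ℝ} {i : ι} (hv : v i ≠ 0) :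
    zeroProb (quarterOn {i}) v = 3 / 4 := by
  obtain ⟨p, hp, -, w, hw⟩ := exists_isZModModel 1 v 0
  have : NeZero p := ⟨hp.ne_zero⟩
  have char_eq (ξ : ZMod p) :
      walkChar (quarterOn {i}) w ξ = 3 / 4 + 1 / 4 * cosChar (ξ * w i) := by
    rw [walkChar_quarterOn, prod_singleton]; ring
  simp_rw [hw.zeroProb_eq le_rfl, char_eq]
  rw [expect_add_distrib, ← mul_expect, expect_cosChar_mul,
    if_neg ((hw.eq_zero_iff le_rfl i).not.1 hv), expect_const univ_nonempty]
  norm_num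

theorem zeroProb_quarterOn_le_three_quarters {v : ι → ℝ} {J : Finset ι} {i : ι} (hi : i ∈ J)
    (hv : v i ≠ 0) : zeroProb (quarterOn J) v ≤ 3 / 4 :=
  (zeroProb_quarterOn_anti (singleton_subset_iff.2 hi) v).trans_eq
    (zeroProb_quarterOn_singleton hv)

end ZeroProb

/-! ### Gain from lowering the laziness -/

section Energy

variable {ι : Type*} [Fintype ι] {p : ℕ} [NeZero p]

/-- The energy of the frequency `ξ`, which is comparable to `-log (walkChar μ w ξ) / μ` for small
constant `μ`. -/
def energy (w : ι → ZMod p) (ξ : ZMod p) : ℝ := ∑ i, (1 - cosChar (ξ * w i))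

open Classical in
/-- The set of frequencies of energy at most `s`. -/
def energyBall (w : ι → ZMod p) (s : ℝ) : Finset (ZMod p) := {ξ | energy w ξ ≤ s}

theorem mem_energyBall {w : ι → ZMod p} {s : ℝ} {ξ : ZMod p} :
    ξ ∈ energyBall w s ↔ energy w ξ ≤ s := by
  simp [energyBall]

theorem energy_nonneg (w : ι → ZMod p) (ξ : ZMod p) : 0 ≤ energy w ξ :=
  sum_nonneg fun _ _ => one_sub_cosChar_nonneg _

theorem zero_mem_energyBall (w : ι → ZMod p) {s : ℝ} (hs : 0 ≤ s) : 0 ∈ energyBall w s := by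
  simpa [mem_energyBall, energy, cosChar_zero] using hs

theorem energy_add_le (w : ι → ZMod p) (x y : ZMod p) {k : ℝ} (hk : 0 < k) :
    energy w (x + y) ≤ (1 + 1 / k) * energy w x + (1 + k) * energy w y := by
  unfold energy
  rw [mul_sum, mul_sum, ← sum_add_distrib]
  refine sum_le_sum fun i _ => ?_
  rw [add_mul]
  exact one_sub_cosChar_add_le _ _ hk

theorem energyBall_add_subset (w : ι → ZMod p) (s : ℝ) {k : ℝ} (hk : 0 < k) :
    energyBall w (k ^ 2 * s) + energyBall w s ⊆ energyBall w ((k + 1) ^ 2 * s) := by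
  intro z hz
  obtain ⟨x, hx, y, hy, rfl⟩ := mem_add.1 hz
  rw [mem_energyBall] at *
  calc energy w (x + y) ≤ (1 + 1 / k) * energy w x + (1 + k) * energy w y := energy_add_le w x y hk
    _ ≤ (1 + 1 / k) * (k ^ 2 * s) + (1 + k) * s := by gcongr
    _ = (k + 1) ^ 2 * s := by field_simp; ring

theorem min_le_card_energyBall [Fact p.Prime] (w : ι → ZMod p) {s : ℝ} (hs : 0 ≤ s) (k : ℕ) :
    min p ((k + 1) * (#(energyBall w s) - 1) + 1) ≤ #(energyBall w ((k + 1 : ℝ) ^ 2 * s)) := by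
  induction k with
  | zero =>
    have : 0 < #(energyBall w s) := card_pos.2 ⟨0, zero_mem_energyBall w hs⟩
    simp only [CharP.cast_eq_zero, zero_add, one_mul, one_pow]
    omega
  | succ k ih =>
    have cauchy_davenport := ZMod.cauchy_davenport (Fact.out : p.Prime)
      ⟨0, zero_mem_energyBall w (by positivity : 0 ≤ (k + 1 : ℝ) ^ 2 * s)⟩
      ⟨0, zero_mem_energyBall w hs⟩
    have subset_card := card_le_card (energyBall_add_subset w s (by positivity : 0 < (k + 1 : ℝ)))
    have : (k + 1 + 1) * (#(energyBall w s) - 1) + 1 =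
        (k + 1) * (#(energyBall w s) - 1) + 1 + (#(energyBall w s) - 1) := by ring
    have : 0 < #(energyBall w s) := card_pos.2 ⟨0, zero_mem_energyBall w hs⟩
    push_cast
    omega

theorem mul_card_energyBall_le [Fact p.Prime] (w : ι → ZMod p) {s : ℝ} (hs : 0 ≤ s) {j : ℕ}
    (hlt : #(energyBall w ((j : ℝ) ^ 2 * s)) < p) :
    j * #(energyBall w s) ≤ #(energyBall w ((j : ℝ) ^ 2 * s)) + j := by
  obtain - | k := j
  · simp
  have h := min_le_card_energyBall w hs k
  push_cast at hlt ⊢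
  obtain ⟨c, hc⟩ : ∃ c, #(energyBall w s) = c + 1 :=
    ⟨_, (Nat.succ_pred_eq_of_pos (card_pos.2 ⟨0, zero_mem_energyBall w hs⟩)).symm⟩
  rw [hc, Nat.add_sub_cancel] at h
  rw [hc, mul_add, mul_one]
  omega

theorem sum_energy (w : ι → ZMod p) : ∑ ξ, energy w ξ = p * #{i | w i ≠ 0} := by
  have sum_one_sub (i : ι) :
      ∑ ξ : ZMod p, (1 - cosChar (ξ * w i)) = p * if w i ≠ 0 then (1 : ℝ) else 0 := by
    rw [← Fintype.card_smul_expect, expect_sub_distrib, expect_cosChar_mul,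
      expect_const univ_nonempty, ZMod.card, nsmul_eq_mul]
    by_cases h : w i = 0 <;> simp [h]
  unfold energy
  rw [sum_comm, sum_congr rfl fun i _ => sum_one_sub i, ← mul_sum, sum_boole]

theorem card_energyBall_lt (w : ι → ZMod p) {s : ℝ} (hs : s < #{i | w i ≠ 0}) :
    #(energyBall w s) < p := by
  by_contra hge
  have ball_eq_univ : energyBall w s = univ :=
    eq_univ_of_card _ (le_antisymm (card_le_univ _) (by rw [ZMod.card]; exact not_lt.1 hge))
  have hp : (0 : ℝ) < p := mod_cast NeZero.pos p
  have : ∑ ξ, energy w ξ ≤ p * s := by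
    simpa using sum_le_card_nsmul univ (energy w) s
      fun ξ _ => mem_energyBall.1 (ball_eq_univ ▸ mem_univ ξ)
  rw [sum_energy] at this
  exact (le_of_mul_le_mul_left this hp).not_gt hs

theorem exp_neg_two_mul_le {x : ℝ} (h0 : 0 ≤ x) (h1 : x ≤ 1 / 2) : Real.exp (-(2 * x)) ≤ 1 - x := by
  rw [Real.exp_neg, inv_le_iff_one_le_mul₀ (Real.exp_pos _)]
  nlinarith [Real.add_one_le_exp (2 * x)]

variable {μ : ℝ}

theorem exp_neg_energy_le_walkChar (h0 : 0 ≤ μ) (h1 : μ ≤ 1 / 4) (w : ι → ZMod p) (ξ : ZMod p) :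
    Real.exp (-(2 * μ * energy w ξ)) ≤ walkChar (fun _ => μ) w ξ := by
  have : -(2 * μ * energy w ξ) = ∑ i, -(2 * (μ * (1 - cosChar (ξ * w i)))) := by
    rw [energy, sum_neg_distrib, ← mul_sum, ← mul_sum, mul_assoc]
  rw [this, Real.exp_sum]
  refine prod_le_prod (fun _ _ => (Real.exp_pos _).le) fun i _ => exp_neg_two_mul_le ?_ ?_
  · exact mul_nonneg h0 (one_sub_cosChar_nonneg _)
  · nlinarith [one_sub_cosChar_nonneg (ξ * w i), one_sub_cosChar_le_two (ξ * w i)]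

theorem walkChar_le_exp_neg_energy (h1 : μ ≤ 1 / 2) (w : ι → ZMod p) (ξ : ZMod p) :
    walkChar (fun _ => μ) w ξ ≤ Real.exp (-(μ * energy w ξ)) := by
  rw [energy, mul_sum, ← sum_neg_distrib, Real.exp_sum]
  exact prod_le_prod (fun i _ => one_sub_mul_one_sub_cosChar_nonneg h1 _)
    fun i _ => Real.one_sub_le_exp_neg _

theorem card_energyBall_mul_exp_le (h0 : 0 ≤ μ) (h1 : μ ≤ 1 / 4) (w : ι → ZMod p) (s : ℝ) :
    #(energyBall w s) * Real.exp (-(2 * μ * s)) ≤ ∑ ξ, walkChar (fun _ => μ) w ξ := by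
  rw [← nsmul_eq_mul, ← sum_const]
  calc ∑ _ξ ∈ energyBall w s, Real.exp (-(2 * μ * s))
      ≤ ∑ ξ ∈ energyBall w s, walkChar (fun _ => μ) w ξ := by
        refine sum_le_sum fun ξ hξ => le_trans ?_ (exp_neg_energy_le_walkChar h0 h1 w ξ)
        gcongr
        exact mem_energyBall.1 hξ
    _ ≤ ∑ ξ, walkChar (fun _ => μ) w ξ :=
        sum_le_univ_sum_of_nonneg fun ξ => walkChar_nonneg (fun _ => by linarith) w ξ

theorem walkChar_eighth_le (h0 : 0 ≤ μ) (h1 : μ ≤ 1 / 32) (w : ι → ZMod p) {t : ℝ} (ht : 0 < t)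
    {ξ : ZMod p} (hξ : ξ ∉ energyBall w (16 * t)) :
    walkChar (fun _ => 1 / 8) w ξ ≤ walkChar (fun _ => μ) w ξ / t := by
  rw [mem_energyBall, not_le] at hξ
  have exp_le_inv : Real.exp (-(1 / 16 * energy w ξ)) ≤ t⁻¹ := by
    rw [Real.exp_neg]
    exact inv_anti₀ ht (by linarith [Real.add_one_le_exp (1 / 16 * energy w ξ)])
  calc walkChar (fun _ => 1 / 8) w ξ
      ≤ Real.exp (-(1 / 8 * energy w ξ)) := walkChar_le_exp_neg_energy (by norm_num) w ξ
    _ = Real.exp (-(1 / 16 * energy w ξ)) * Real.exp (-(1 / 16 * energy w ξ)) := by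
        rw [← Real.exp_add]; ring_nf
    _ ≤ Real.exp (-(2 * μ * energy w ξ)) * t⁻¹ := by
        gcongr
        · exact energy_nonneg w ξ
        · linarith
    _ ≤ walkChar (fun _ => μ) w ξ / t := by
        rw [← div_eq_mul_inv]
        gcongr
        exact exp_neg_energy_le_walkChar h0 (by linarith) w ξ

theorem sum_walkChar_eighth_le (h0 : 0 ≤ μ) (h1 : μ ≤ 1 / 32) (w : ι → ZMod p) {t : ℝ}
    (ht : 0 < t) : ∑ ξ, walkChar (fun _ => 1 / 8) w ξ ≤
      #(energyBall w (16 * t)) + (∑ ξ, walkChar (fun _ => μ) w ξ) / t := by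
  rw [sum_div, ← sum_add_sum_compl (energyBall w (16 * t)), cast_card]
  have quotient_nonneg (ξ : ZMod p) : 0 ≤ walkChar (fun _ => μ) w ξ / t :=
    div_nonneg (walkChar_nonneg (fun _ => by linarith) w ξ) ht.le
  refine add_le_add (sum_le_sum fun ξ _ => ?_) ?_
  · refine (walkChar_le_exp_neg_energy (by norm_num) w ξ).trans (Real.exp_le_one_iff.2 ?_)
    linarith [energy_nonneg w ξ]
  · exact (sum_le_sum fun ξ hξ => walkChar_eighth_le h0 h1 w ht (mem_compl.1 hξ)).trans
      (sum_le_univ_sum_of_nonneg quotient_nonneg)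

end Energy

section Gain

variable {ι : Type*} [Fintype ι]

theorem half_pow_card_le_zeroProb [DecidableEq ι] {μ : ℝ} (h0 : 0 ≤ μ) (h1 : μ ≤ 1 / 2)
    (v : ι → ℝ) : (1 / 2) ^ Fintype.card ι ≤ zeroProb (fun _ => μ) v := by
  refine le_trans ?_ (prod_one_sub_le_zeroProb (fun _ => h0) (fun _ => by linarith) v)
  rw [prod_const, card_univ]
  gcongr
  linarith

theorem IsZModModel.le_sum_walkChar {p N : ℕ} [NeZero p] {v : ι → ℝ} {w : ι → ZMod p}
    (h : IsZModModel 1 v w) (hp : N * 2 ^ Fintype.card ι ≤ p) {μ : ℝ} (h0 : 0 ≤ μ)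
    (h1 : μ ≤ 1 / 2) : (N : ℝ) ≤ ∑ ξ, walkChar (fun _ => μ) w ξ := by
  classical
  have lower := half_pow_card_le_zeroProb h0 h1 v
  have p_pos : (0 : ℝ) < p := by exact_mod_cast NeZero.pos p
  rw [h.zeroProb_eq le_rfl, Fintype.expect_eq_sum_div_card, ZMod.card, le_div_iff₀ p_pos] at lower
  have hp' : (N : ℝ) * 2 ^ Fintype.card ι ≤ p := by exact_mod_cast hp
  calc (N : ℝ) = (1 / 2) ^ Fintype.card ι * (N * 2 ^ Fintype.card ι) := by
        rw [mul_left_comm, ← mul_pow]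
        norm_num
    _ ≤ (1 / 2) ^ Fintype.card ι * p := by gcongr
    _ ≤ _ := lower

variable [DecidableEq ι]

/-- Lowering the laziness from `1/8` to `1/(32 j³)` gains a factor of order `j`: the frequencies
outside `energyBall (16 j)` contribute little, and by Cauchy–Davenport this ball is `j` times
smaller than `energyBall (16 j³)`, on which the lazier characteristic function is at least
`1/e`. -/
theorem zeroProb_eighth_le {j : ℕ} (hj : 0 < j) {v : ι → ℝ} (hsupp : 16 * j ^ 3 < #{i | v i ≠ 0}) :
    zeroProb (fun _ => 1 / 8) v ≤ 5 / j * zeroProb (fun _ => 1 / (32 * (j : ℝ) ^ 3)) v := by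
  obtain ⟨p, hp, hpj, w, hw⟩ := exists_isZModModel 1 v (j * 2 ^ Fintype.card ι)
  have : Fact p.Prime := ⟨hp⟩
  have hj' : (1 : ℝ) ≤ j := mod_cast hj
  set μ : ℝ := 1 / (32 * (j : ℝ) ^ 3) with hμ
  have hμ0 : 0 ≤ μ := by positivity
  have hμ1 : μ ≤ 1 / 32 :=
    one_div_le_one_div_of_le (by norm_num) (by linarith [one_le_pow₀ hj' (n := 3)])
  set S := ∑ ξ, walkChar (fun _ => μ) w ξ with hS
  have hp0 : (0 : ℝ) < p := mod_cast hp.pos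
  have zeroProb_eq (a : ℝ) :
      zeroProb (fun _ => a) v = (∑ ξ, walkChar (fun _ => a) w ξ) / p := by
    rw [hw.zeroProb_eq le_rfl, Fintype.expect_eq_sum_div_card, ZMod.card]
  have j_le_S : (j : ℝ) ≤ S := hw.le_sum_walkChar hpj hμ0 (by linarith)
  have card_large_ball : #(energyBall w ((j : ℝ) ^ 2 * (16 * j))) ≤ Real.exp 1 * S := by
    have h := card_energyBall_mul_exp_le hμ0 (by linarith) w ((j : ℝ) ^ 2 * (16 * j))
    have : 2 * μ * ((j : ℝ) ^ 2 * (16 * j)) = 1 := by rw [hμ]; field_simp; norm_num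
    rwa [this, Real.exp_neg, ← div_eq_mul_inv, div_le_iff₀' (Real.exp_pos 1)] at h
  have card_small_ball : (j : ℝ) * #(energyBall w (16 * j)) ≤ Real.exp 1 * S + S := by
    have h := mul_card_energyBall_le w (by positivity : (0 : ℝ) ≤ 16 * j)
      (card_energyBall_lt w (s := (j : ℝ) ^ 2 * (16 * j)) (by
        simp_rw [ne_eq, ← hw.eq_zero_iff le_rfl]
        calc (j : ℝ) ^ 2 * (16 * j) = ((16 * j ^ 3 : ℕ) : ℝ) := by push_cast; ring
          _ < _ := mod_cast hsupp))
    have : (j : ℝ) * #(energyBall w (16 * j)) ≤ #(energyBall w ((j : ℝ) ^ 2 * (16 * j))) + j :=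
      mod_cast h
    linarith
  rw [zeroProb_eq, zeroProb_eq, mul_div_assoc', div_le_div_iff_of_pos_right hp0, ← hS,
    div_mul_eq_mul_div, le_div_iff₀' (by linarith)]
  calc j * ∑ ξ, walkChar (fun _ => 1 / 8) w ξ
      ≤ j * (#(energyBall w (16 * j)) + S / j) := by
        gcongr
        exact sum_walkChar_eighth_le hμ0 hμ1 w (by linarith)
    _ = j * #(energyBall w (16 * j)) + S := by field_simp
    _ ≤ 5 * S := by nlinarith [Real.exp_one_lt_d9]

end Gain

/-! ### Orthogonality to a subspace -/

section Rank

variable {K V : Type*} [Field K] [AddCommGroup V] [Module K V]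

theorem finrank_le_finrank_inf_ker_add_one [FiniteDimensional K V] (U : Submodule K V)
    (l : V →ₗ[K] K) :
    Module.finrank K U ≤ Module.finrank K (U ⊓ LinearMap.ker l : Submodule K V) + 1 := by
  have rank_nullity := LinearMap.finrank_range_add_finrank_ker (l.domRestrict U)
  have range_le : Module.finrank K (LinearMap.range (l.domRestrict U)) ≤ 1 :=
    (Submodule.finrank_le _).trans_eq (Module.finrank_self K)
  have map_ker : (LinearMap.ker (l.domRestrict U)).map U.subtype = U ⊓ LinearMap.ker l := by
    ext x; simp [LinearMap.domRestrict_apply, and_comm]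
  rw [← map_ker, Submodule.finrank_map_subtype_eq]
  omega

theorem finrank_inf_ker_add_one [FiniteDimensional K V] (U : Submodule K V) (l : V →ₗ[K] K)
    (h : ∃ u ∈ U, l u ≠ 0) :
    Module.finrank K (U ⊓ LinearMap.ker l : Submodule K V) + 1 = Module.finrank K U := by
  obtain ⟨u, hu, hlu⟩ := h
  have inf_lt : U ⊓ LinearMap.ker l < U := lt_of_le_not_ge inf_le_left fun hle => hlu (hle hu).2
  exact le_antisymm (Submodule.finrank_lt_finrank_of_lt inf_lt)
    (finrank_le_finrank_inf_ker_add_one U l)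

variable {ι : Type*} [Fintype ι]

theorem exists_finset_coord_independent (U : Submodule K (ι → K)) :
    ∃ B : Finset ι, #B = Module.finrank K U ∧
      ∀ z : ι → K, (∀ i ∉ B, z i = 0) → (∀ u ∈ U, z ⬝ᵥ u = 0) → z = 0 := by
  classical
  let coord (i : ι) : Module.Dual K U := (LinearMap.proj i).domRestrict U
  have span_coord : Submodule.span K (Set.range coord) = ⊤ := by
    have coann_eq_bot : (Submodule.span K (Set.range coord)).dualCoannihilator = ⊥ := by
      refine (Submodule.eq_bot_iff _).2 fun u hu => Subtype.ext (funext fun i => ?_)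
      exact (Submodule.mem_dualCoannihilator u).1 hu _
        (Submodule.subset_span (Set.mem_range_self i))
    rw [← Subspace.dualCoannihilator_dualAnnihilator_eq (W := .span K (Set.range coord)),
      coann_eq_bot, Submodule.dualAnnihilator_bot]
  obtain ⟨κ, a, ha, hspan, hli⟩ := exists_linearIndependent' K coord
  have := Fintype.ofInjective a ha
  refine ⟨univ.map ⟨a, ha⟩, ?_, fun z hz hzU => ?_⟩
  · rw [card_map, card_univ, ← finrank_span_eq_card hli, hspan, span_coord, finrank_top,
      Subspace.dual_finrank_eq]
  · have comb_eq_zero : ∑ k, z (a k) • coord (a k) = 0 := by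
      ext u
      have h := hzU u u.2
      rw [dotProduct, ← sum_subset (subset_univ (univ.map ⟨a, ha⟩))
        fun i _ hi => by rw [hz i hi, zero_mul], sum_map] at h
      simpa [coord] using h
    have := Fintype.linearIndependent_iff.1 hli (z ∘ a) comb_eq_zero
    funext i
    by_cases hi : i ∈ univ.map ⟨a, ha⟩
    · obtain ⟨k, -, rfl⟩ := mem_map.1 hi
      exact this k
    · exact hz i hi

end Rank

section OrthProb

theorem signVec_injective {ι : Type*} : Function.Injective (signVec (ι := ι)) := by
  intro Y Z h
  funext i
  have cast_eq : ((Y i : SignType) : ℝ) = (Z i : SignType) := congrFun h i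
  revert cast_eq
  generalize Y i = y
  generalize Z i = z
  cases y <;> cases z <;> norm_num

variable {ι : Type*} [Fintype ι] [DecidableEq ι] {μ : ι → ℝ}

/-- The probability that a lazy random sign vector is orthogonal to the subspace `U`. -/
def orthProb (μ : ι → ℝ) (U : Submodule ℝ (ι → ℝ)) : ℝ :=
  lazyProb μ fun Y => ∀ u ∈ U, signVec Y ⬝ᵥ u = 0

theorem lazyProb_le_pow_of_determined (h0 : ∀ i, 0 ≤ μ i) (h1 : ∀ i, μ i ≤ 1) {B : Finset ι}
    {a : ℝ} (ha : 0 ≤ a) (hμ : ∀ i ∈ B, ∀ s, lazyWeight (μ i) s ≤ a)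
    {E : (ι → SignType) → Prop}
    (hE : ∀ Y Z, E Y → E Z → (∀ i ∉ B, Y i = Z i) → Y = Z) : lazyProb μ E ≤ a ^ #B := by
  classical
  have weight_le (Y : ι → SignType) :
      walkWeight μ Y ≤ a ^ #B * walkWeight (fun i : {i // i ∉ B} => μ i) fun i => Y i := by
    have off_B : walkWeight (fun i : {i // i ∉ B} => μ i) (fun i => Y i) =
        ∏ i ∈ Bᶜ, lazyWeight (μ i) (Y i) :=
      (prod_subtype Bᶜ (fun i => mem_compl) fun i => lazyWeight (μ i) (Y i)).symm
    rw [off_B, walkWeight, ← prod_mul_prod_compl B]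
    exact mul_le_mul_of_nonneg_right
      ((prod_le_prod (fun i _ => lazyWeight_nonneg (h0 i) (h1 i) _) fun i hi =>
        hμ i hi _).trans_eq (prod_const a))
      (prod_nonneg fun i _ => lazyWeight_nonneg (h0 i) (h1 i) _)
  have sum_off_B_le :
      ∑ Y with E Y, walkWeight (fun i : {i // i ∉ B} => μ i) (fun i => Y i) ≤ 1 := by
    let restrict (Y : ι → SignType) (i : {i // i ∉ B}) : SignType := Y i
    have restrict_injOn : Set.InjOn restrict {Y ∈ univ | E Y} := fun Y hY Z hZ hYZ =>
      hE Y Z hY.2 hZ.2 fun i hi => congrFun hYZ ⟨i, hi⟩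
    rw [← sum_walkWeight fun i : {i // i ∉ B} => μ i,
      ← sum_image (g := restrict) (f := walkWeight fun i : {i // i ∉ B} => μ i)
        (by simpa using restrict_injOn)]
    exact sum_le_sum_of_subset_of_nonneg (subset_univ _)
      fun _ _ _ => walkWeight_nonneg (μ := fun i : {i // i ∉ B} => μ i) (h0 ·) (h1 ·) _
  calc lazyProb μ E ≤ _ := sum_le_sum fun Y _ => weight_le Y
    _ ≤ a ^ #B := by
      rw [← mul_sum]
      exact mul_le_of_le_one_right (pow_nonneg ha _) sum_off_B_le

theorem orthProb_le_pow (h0 : ∀ i, 0 ≤ μ i) (h1 : ∀ i, μ i ≤ 1) {P : Finset ι} {a : ℝ}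
    (ha : 0 ≤ a) (ha1 : a ≤ 1) (hP : ∀ i ∈ P, ∀ s, lazyWeight (μ i) s ≤ a)
    {U : Submodule ℝ (ι → ℝ)} {e : ℕ} (he : e + Fintype.card ι ≤ Module.finrank ℝ U + #P) :
    orthProb μ U ≤ a ^ e := by
  obtain ⟨B, hB, eq_zero⟩ := exists_finset_coord_independent U
  have determined (Y Z : ι → SignType) (hY : ∀ u ∈ U, signVec Y ⬝ᵥ u = 0)
      (hZ : ∀ u ∈ U, signVec Z ⬝ᵥ u = 0) (hYZ : ∀ i ∉ B ∩ P, Y i = Z i) : Y = Z := by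
    refine signVec_injective (sub_eq_zero.1 (eq_zero _ (fun i hi => ?_) fun u hu => ?_))
    · have := hYZ i fun h => hi (mem_inter.1 h).1
      simp [signVec, this]
    · rw [sub_dotProduct, hY u hu, hZ u hu, sub_zero]
  refine (lazyProb_le_pow_of_determined h0 h1 ha (fun i hi => hP i (mem_inter.1 hi).2)
    determined).trans (pow_le_pow_of_le_one ha ha1 ?_)
  have := card_union_add_card_inter B P
  have := card_le_univ (B ∪ P)
  omega

theorem lazyWeight_le_one_sub {a : ℝ} (ha : a ≤ 2 / 3) (s : SignType) :
    lazyWeight a s ≤ 1 - a := by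
  unfold lazyWeight
  split_ifs <;> linarith

theorem orthProb_const_le {a : ℝ} (h0 : 0 ≤ a) (h1 : a ≤ 2 / 3) {U : Submodule ℝ (ι → ℝ)} {e : ℕ}
    (he : e ≤ Module.finrank ℝ U) : orthProb (fun _ => a) U ≤ (1 - a) ^ e :=
  orthProb_le_pow (fun _ => h0) (fun _ => by linarith) (by linarith) (by linarith)
    (P := univ) (fun _ _ => lazyWeight_le_one_sub h1) (by rw [card_univ]; omega)

theorem orthProb_quarterOn_le {P : Finset ι} {U : Submodule ℝ (ι → ℝ)} {e : ℕ}
    (he : e + Fintype.card ι ≤ Module.finrank ℝ U + #P) :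
    orthProb (quarterOn P) U ≤ (3 / 4) ^ e :=
  orthProb_le_pow (quarterOn_nonneg P) (fun i => (quarterOn_le P i).trans (by norm_num))
    (by norm_num) (by norm_num)
    (fun i hi s => (lazyWeight_le_one_sub ((quarterOn_le P i).trans (by norm_num)) s).trans (by
      simp only [quarterOn, hi, if_true]
      norm_num)) he

end OrthProb

/-! ### Greedy intersection with random hyperplanes -/

section Greedy

theorem exists_le_of_le_sum_mul {α : Type*} {s : Finset α} {W S : α → ℝ} {c : ℝ} (hc : 0 < c)
    (hW : ∀ y ∈ s, 0 ≤ W y) (hW1 : ∑ y ∈ s, W y ≤ 1) (hS : ∀ y ∈ s, 0 ≤ S y)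
    (h : c ≤ ∑ y ∈ s, W y * S y) : ∃ y ∈ s, c ≤ S y := by
  have hs : s.Nonempty := nonempty_of_ne_empty fun hs => by simp [hs] at h; linarith
  obtain ⟨y, hy, hmax⟩ := exists_max_image s S hs
  refine ⟨y, hy, h.trans ?_⟩
  calc ∑ z ∈ s, W z * S z ≤ ∑ z ∈ s, W z * S y :=
        sum_le_sum fun z hz => mul_le_mul_of_nonneg_left (hmax z hz) (hW z hz)
    _ ≤ S y := by
        rw [← sum_mul]
        exact mul_le_of_le_one_left (hS y hy) hW1

variable {ι : Type*} [Fintype ι] [DecidableEq ι] {Ω : Type*}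

open Classical in
theorem zeroProb_sub_orthProb (μ : ι → ℝ) {U : Submodule ℝ (ι → ℝ)} {v : ι → ℝ} (hv : v ∈ U) :
    zeroProb μ v - orthProb μ U = ∑ Y with ¬∀ u ∈ U, signVec Y ⬝ᵥ u = 0,
      walkWeight μ Y * if signVec Y ⬝ᵥ v = 0 then 1 else 0 := by
  simp only [mul_ite, mul_one, mul_zero]
  rw [sub_eq_iff_eq_add', ← sum_filter, filter_filter, zeroProb, orthProb, lazyProb, lazyProb,
    ← sum_filter_add_sum_filter_not _ fun Y => ∀ u ∈ U, signVec Y ⬝ᵥ u = 0, filter_filter,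
    filter_filter]
  congr 2 <;> ext Y
  · simpa using fun h => h v hv
  · simp [and_comm]

open Classical in
theorem exists_hyperplane_le_sum {BS : Finset Ω} {v : Ω → ι → ℝ} {μ : ι → ℝ}
    (h0 : ∀ i, 0 ≤ μ i) (h1 : ∀ i, μ i ≤ 1) {U : Submodule ℝ (ι → ℝ)} {w q : Ω → ℝ} {c : ℝ}
    (hc : 0 < c) (hw : ∀ ω ∈ BS, 0 ≤ w ω) (hq : ∀ ω ∈ BS, 0 < q ω)
    (hqU : ∀ ω ∈ BS, v ω ∈ U → q ω ≤ zeroProb μ (v ω) - orthProb μ U)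
    (hcw : c ≤ ∑ ω ∈ BS with v ω ∈ U, w ω) :
    ∃ U' : Submodule ℝ (ι → ℝ), Module.finrank ℝ U' + 1 = Module.finrank ℝ U ∧
      c ≤ ∑ ω ∈ BS with v ω ∈ U', w ω * (q ω)⁻¹ := by
  let hyperplane (Y : ι → SignType) : Submodule ℝ (ι → ℝ) :=
    U ⊓ LinearMap.ker (dotProductBilin ℝ ℝ (signVec Y))
  let S (Y : ι → SignType) : ℝ := ∑ ω ∈ BS with v ω ∈ hyperplane Y, w ω * (q ω)⁻¹
  have term_nonneg (ω) (hω : ω ∈ BS) : 0 ≤ w ω * (q ω)⁻¹ :=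
    mul_nonneg (hw ω hω) (inv_nonneg.2 (hq ω hω).le)
  have le_average : c ≤ ∑ Y with ¬∀ u ∈ U, signVec Y ⬝ᵥ u = 0, walkWeight μ Y * S Y := by
    have S_eq (Y) : S Y = ∑ ω ∈ BS with v ω ∈ U,
        w ω * (q ω)⁻¹ * if signVec Y ⬝ᵥ v ω = 0 then 1 else 0 := by
      simp only [S, hyperplane, mul_ite, mul_one, mul_zero]
      rw [← sum_filter, filter_filter]
      simp only [Submodule.mem_inf, LinearMap.mem_ker, dotProductBilin_apply_apply]
    simp only [S_eq, mul_sum]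
    rw [sum_comm]
    refine hcw.trans (sum_le_sum fun ω hω => ?_)
    obtain ⟨hω, hωU⟩ := mem_filter.1 hω
    simp only [mul_left_comm (walkWeight μ _)]
    rw [← mul_sum, ← zeroProb_sub_orthProb μ hωU, mul_assoc]
    refine le_mul_of_one_le_right (hw ω hω) ?_
    rw [← div_eq_inv_mul, one_le_div (hq ω hω)]
    exact hqU ω hω hωU
  have mass_le_one : ∑ Y with ¬∀ u ∈ U, signVec Y ⬝ᵥ u = 0, walkWeight μ Y ≤ 1 :=
    (sum_le_univ_sum_of_nonneg (walkWeight_nonneg h0 h1)).trans_eq (sum_walkWeight μ)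
  obtain ⟨Y, hY, hcY⟩ := exists_le_of_le_sum_mul (S := S) hc
    (fun Y _ => walkWeight_nonneg h0 h1 Y) mass_le_one
    (fun Y _ => sum_nonneg fun ω hω => term_nonneg ω (mem_filter.1 hω).1) le_average
  refine ⟨hyperplane Y, finrank_inf_ker_add_one U _ ?_, hcY⟩
  simpa using hY

open Classical in
theorem exists_submodule_card_le_sum {BS : Finset Ω} (hBS : BS.Nonempty) {v : Ω → ι → ℝ}
    {μ : ℕ → ι → ℝ} (h0 : ∀ k i, 0 ≤ μ k i) (h1 : ∀ k i, μ k i ≤ 1) {q : ℕ → Ω → ℝ} {K : ℕ}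
    (hq : ∀ k < K, ∀ ω ∈ BS, 0 < q k ω)
    (h : ∀ k < K, ∀ U : Submodule ℝ (ι → ℝ), Module.finrank ℝ U + k = Fintype.card ι →
      ∀ ω ∈ BS, v ω ∈ U → q k ω ≤ zeroProb (μ k) (v ω) - orthProb (μ k) U) :
    ∃ U : Submodule ℝ (ι → ℝ), Module.finrank ℝ U + K = Fintype.card ι ∧
      (#BS : ℝ) ≤ ∑ ω ∈ BS with v ω ∈ U, ∏ k ∈ range K, (q k ω)⁻¹ := by
  induction K with
  | zero => exact ⟨⊤, by simp, by simp⟩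
  | succ K ih =>
    obtain ⟨U, hU, hcard⟩ := ih (fun k hk => hq k (by omega)) fun k hk => h k (by omega)
    obtain ⟨U', hU', hcard'⟩ := exists_hyperplane_le_sum (h0 K) (h1 K)
      (by exact_mod_cast hBS.card_pos)
      (fun ω hω => prod_nonneg fun k hk =>
        inv_nonneg.2 (hq k (by have := mem_range.1 hk; omega) ω hω).le)
      (hq K (by omega)) (h K (by omega) U hU) hcard
    refine ⟨U', by omega, ?_⟩
    simpa only [prod_range_succ] using hcard'

end Greedy

/-! ### Revealing a symmetric sign matrix row by row -/

section Border

variable {n : ℕ}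

/-- The sample of size `n + 1` with leading block `ω` and last column `x`; the last row `y` lies
below the diagonal, where `symMat` does not look. -/
def border (ω : Fin n → Fin n → Bool) (x : Fin (n + 1) → Bool) (y : Fin n → Bool) :
    Fin (n + 1) → Fin (n + 1) → Bool :=
  Fin.snoc (α := fun _ => Fin (n + 1) → Bool)
    (fun i => Fin.snoc (α := fun _ => Bool) (ω i) (x i.castSucc))
    (Fin.snoc (α := fun _ => Bool) y (x (Fin.last n)))

/-- `border` as a bijection between samples of size `n + 1` and triples `(x, y, ω)`. -/
def borderEquiv (n : ℕ) : ((Fin (n + 1) → Bool) × (Fin n → Bool) × (Fin n → Fin n → Bool)) ≃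
    (Fin (n + 1) → Fin (n + 1) → Bool) where
  toFun z := border z.2.2 z.1 z.2.1
  invFun ω := (fun i => ω i (Fin.last n), fun j => ω (Fin.last n) j.castSucc,
    fun i j => ω i.castSucc j.castSucc)
  left_inv z := by
    obtain ⟨x, y, ω⟩ := z
    refine Prod.ext (funext fun i => ?_) (Prod.ext ?_ ?_)
    · induction i using Fin.lastCases <;> simp [border]
    all_goals simp [border]
  right_inv ω := by
    funext i j
    induction i using Fin.lastCases <;> induction j using Fin.lastCases <;> simp [border]

theorem expect_border (f : (Fin (n + 1) → Fin (n + 1) → Bool) → ℝ) :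
    𝔼 ω, f ω = 𝔼 x, 𝔼 y, 𝔼 ω, f (border ω x y) := by
  rw [← Fintype.expect_equiv (borderEquiv n) (fun z => f (border z.2.2 z.1 z.2.1)) f fun _ => rfl,
    ← univ_product_univ, expect_product]
  exact expect_congr rfl fun x _ => by rw [← univ_product_univ, expect_product]

theorem symMat_border_castSucc_castSucc (ω : Fin n → Fin n → Bool) (x y) (i j : Fin n) :
    symMat ℝ (border ω x y) i.castSucc j.castSucc = symMat ℝ ω i j := by
  rcases le_total i j with h | h <;> simp [symMat, border, h]

theorem symMat_border_castSucc_last (ω : Fin n → Fin n → Bool) (x y) (i : Fin n) :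
    symMat ℝ (border ω x y) i.castSucc (Fin.last n) = signb ℝ (x i.castSucc) := by
  simp [symMat, border, Fin.le_last]

theorem symMat_border_last (ω : Fin n → Fin n → Bool) (x y) (i : Fin (n + 1)) :
    symMat ℝ (border ω x y) (Fin.last n) i = signb ℝ (x i) := by
  induction i using Fin.lastCases <;> simp [symMat, border, Fin.le_last]

theorem symMat_border_mulVec_last (ω : Fin n → Fin n → Bool) (x y) (u : Fin (n + 1) → ℝ) :
    (symMat ℝ (border ω x y) *ᵥ u) (Fin.last n) = ∑ i, signb ℝ (x i) * u i := by
  simp only [mulVec, dotProduct, symMat_border_last]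

theorem symMat_border_mulVec_castSucc (ω : Fin n → Fin n → Bool) (x y) (u : Fin (n + 1) → ℝ)
    (i : Fin n) :
    (symMat ℝ (border ω x y) *ᵥ u) i.castSucc
      = (symMat ℝ ω *ᵥ fun j => u j.castSucc) i + signb ℝ (x i.castSucc) * u (Fin.last n) := by
  simp only [mulVec, dotProduct, Fin.sum_univ_castSucc, symMat_border_castSucc_castSucc,
    symMat_border_castSucc_last]

theorem prob_init (E : (Fin n → Bool) → Prop) :
    prob (fun x : Fin (n + 1) → Bool => E fun i => x i.castSucc) = prob E := by
  rw [← prob_comp_equiv ((Equiv.prodComm _ _).trans (Fin.snocEquiv fun _ => Bool)),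
    ← prob_fst (Ω' := Bool) E]
  simp [Fin.snocEquiv]

/-- The functional `(u, w) ↦ x ⬝ u - w_last`, which vanishes at `(u, M u)` when the last row of `M`
has signs `x`. -/
def lastRowDefect (x : Fin (n + 1) → Bool) : (Fin (n + 1) → ℝ) × (Fin (n + 1) → ℝ) →ₗ[ℝ] ℝ where
  toFun p := ∑ i, signb ℝ (x i) * p.1 i - p.2 (Fin.last n)
  map_add' p q := by
    simp only [Prod.fst_add, Prod.snd_add, Pi.add_apply, mul_add, sum_add_distrib]
    ring
  map_smul' c p := by
    simp only [Prod.smul_fst, Prod.smul_snd, Pi.smul_apply, smul_eq_mul, mul_left_comm _ c,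
      ← mul_sum, mul_sub, RingHom.id_apply]

/-- The map sending `(u, M u)` to `(u', M' u')`, where `M'` is `M` without its last row and
column, which have signs `x`, and `u'` is `u` without its last coordinate. -/
def dropLast (x : Fin (n + 1) → Bool) :
    (Fin (n + 1) → ℝ) × (Fin (n + 1) → ℝ) →ₗ[ℝ] (Fin n → ℝ) × (Fin n → ℝ) where
  toFun p := (fun i => p.1 i.castSucc,
    fun i => p.2 i.castSucc - signb ℝ (x i.castSucc) * p.1 (Fin.last n))
  map_add' p q := by
    ext
    · simp
    · simp; ring
  map_smul' c p := by
    ext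
    · simp
    · simp; ring

theorem lastRowDefect_border (ω : Fin n → Fin n → Bool) (x y) (u : Fin (n + 1) → ℝ) :
    lastRowDefect x (u, symMat ℝ (border ω x y) *ᵥ u) = 0 :=
  sub_eq_zero.2 (symMat_border_mulVec_last ω x y u).symm

theorem dropLast_border (ω : Fin n → Fin n → Bool) (x y) (u : Fin (n + 1) → ℝ) :
    dropLast x (u, symMat ℝ (border ω x y) *ᵥ u)
      = (fun i => u i.castSucc, symMat ℝ ω *ᵥ fun i => u i.castSucc) := by
  ext <;> simp [dropLast, symMat_border_mulVec_castSucc]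

theorem sum_Iic_castSucc (k : Fin n) (f : Fin (n + 1) → ℝ) :
    ∑ i ∈ Iic k.castSucc, f i = ∑ i ∈ Iic k, f i.castSucc := by
  rw [← Fin.map_castSuccEmb_Iic, sum_map]
  rfl

end Border

section RowReveal

variable {n : ℕ}

/-- A choice, for each sample in `S`, of a vector `u` with `(u, M u) ∈ V` and of positive bounds
`ρ k ≥ Q⁻¹` on the atom probabilities of the random signed sum of the coordinates `u i`, `i ≤ k`. -/
structure AtomBounded (Q : ℝ) (V : Submodule ℝ ((Fin n → ℝ) × (Fin n → ℝ)))
    (S : Finset (Fin n → Fin n → Bool)) (u : (Fin n → Fin n → Bool) → Fin n → ℝ)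
    (ρ : Fin n → (Fin n → Fin n → Bool) → ℝ) : Prop where
  mem : ∀ ω ∈ S, (u ω, symMat ℝ ω *ᵥ u ω) ∈ V
  pos : ∀ ω ∈ S, ∀ k, 0 < ρ k ω
  inv_le : ∀ ω ∈ S, ∀ k, (ρ k ω)⁻¹ ≤ Q
  prob_le : ∀ ω ∈ S, ∀ k a,
    prob (fun x : Fin n → Bool => ∑ i ∈ Iic k, signb ℝ (x i) * u ω i = a) ≤ ρ k ω

/-- The mean of `∏ k, (ρ k)⁻¹` over the event `S`. -/
def meanProdInv (S : Finset (Fin n → Fin n → Bool)) (ρ : Fin n → (Fin n → Fin n → Bool) → ℝ) : ℝ :=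
  𝔼 ω, if ω ∈ S then ∏ k, (ρ k ω)⁻¹ else 0

/-- The leading blocks that `x` and `y` complete to an element of `S`. -/
def borderSlice (S : Finset (Fin (n + 1) → Fin (n + 1) → Bool)) (x : Fin (n + 1) → Bool)
    (y : Fin n → Bool) : Finset (Fin n → Fin n → Bool) := {ω | border ω x y ∈ S}

theorem mem_borderSlice {S : Finset (Fin (n + 1) → Fin (n + 1) → Bool)} {x : Fin (n + 1) → Bool}
    {y : Fin n → Bool} {ω : Fin n → Fin n → Bool} : ω ∈ borderSlice S x y ↔ border ω x y ∈ S :=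
  mem_filter_univ _

section Step

variable {Q : ℝ} {V : Submodule ℝ ((Fin (n + 1) → ℝ) × (Fin (n + 1) → ℝ))}
  {S : Finset (Fin (n + 1) → Fin (n + 1) → Bool)}
  {u : (Fin (n + 1) → Fin (n + 1) → Bool) → Fin (n + 1) → ℝ}
  {ρ : Fin (n + 1) → (Fin (n + 1) → Fin (n + 1) → Bool) → ℝ}

theorem AtomBounded.slice (h : AtomBounded Q V S u ρ) (x : Fin (n + 1) → Bool)
    (y : Fin n → Bool) :
    AtomBounded Q ((V ⊓ LinearMap.ker (lastRowDefect x)).map (dropLast x)) (borderSlice S x y)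
      (fun ω i => u (border ω x y) i.castSucc) fun k ω => ρ k.castSucc (border ω x y) where
  mem ω hω := ⟨_, ⟨h.mem _ (mem_borderSlice.1 hω), lastRowDefect_border ω x y _⟩,
    dropLast_border ω x y _⟩
  pos ω hω k := h.pos _ (mem_borderSlice.1 hω) _
  inv_le ω hω k := h.inv_le _ (mem_borderSlice.1 hω) _
  prob_le ω hω k a := by
    have atom_le := h.prob_le _ (mem_borderSlice.1 hω) k.castSucc a
    simp only [sum_Iic_castSucc] at atom_le
    rwa [prob_init fun z : Fin n → Bool =>
      ∑ i ∈ Iic k, signb ℝ (z i) * u (border ω x y) i.castSucc = a] at atom_le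

theorem meanProdInv_eq_expect_border :
    meanProdInv S ρ
      = 𝔼 x, 𝔼 y, 𝔼 ω, if border ω x y ∈ S then ∏ k, (ρ k (border ω x y))⁻¹ else 0 :=
  expect_border _

theorem expect_border_le_mul_meanProdInv (h0 : ∀ ω ∈ S, ∀ k, 0 < ρ k ω) {x : Fin (n + 1) → Bool}
    {y : Fin n → Bool} {c : ℝ}
    (hc : ∀ ω, border ω x y ∈ S → (ρ (Fin.last n) (border ω x y))⁻¹ ≤ c) :
    𝔼 ω, (if border ω x y ∈ S then ∏ k, (ρ k (border ω x y))⁻¹ else 0)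
      ≤ c * meanProdInv (borderSlice S x y) fun k ω => ρ k.castSucc (border ω x y) := by
  rw [meanProdInv, mul_expect]
  refine expect_le_expect fun ω _ => ?_
  simp only [mem_borderSlice]
  split_ifs with hω
  · rw [Fin.prod_univ_castSucc, mul_comm]
    exact mul_le_mul_of_nonneg_right (hc ω hω)
      (prod_nonneg fun k _ => inv_nonneg.2 (h0 _ hω _).le)
  · simp

theorem AtomBounded.prob_le_ker_lastRowDefect_le (h : AtomBounded Q V S u ρ)
    {ω : Fin (n + 1) → Fin (n + 1) → Bool} (hω : ω ∈ S) :
    prob (fun x : Fin (n + 1) → Bool => V ≤ LinearMap.ker (lastRowDefect x))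
      ≤ ρ (Fin.last n) ω := by
  refine le_trans (prob_mono fun x hx => ?_)
    (h.prob_le ω hω (Fin.last n) ((symMat ℝ ω *ᵥ u ω) (Fin.last n)))
  have Iic_last : Iic (Fin.last n) = univ := Iic_top
  rw [Iic_last]
  exact sub_eq_zero.1 (hx (h.mem ω hω))

variable {a : ℝ}

theorem AtomBounded.expect_border_le_of_le_ker (h : AtomBounded Q V S u ρ) (ha : 1 ≤ a * Q)
    {x : Fin (n + 1) → Bool} {y : Fin n → Bool}
    (ih : meanProdInv (borderSlice S x y) (fun k ω => ρ k.castSucc (border ω x y))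
      ≤ (a * Q) ^ Module.finrank ℝ ((V ⊓ LinearMap.ker (lastRowDefect x)).map (dropLast x)))
    (hx : V ≤ LinearMap.ker (lastRowDefect x)) :
    𝔼 ω, (if border ω x y ∈ S then ∏ k, (ρ k (border ω x y))⁻¹ else 0)
      ≤ (prob fun z : Fin (n + 1) → Bool => V ≤ LinearMap.ker (lastRowDefect z))⁻¹
        * (a * Q) ^ Module.finrank ℝ V := by
  refine (expect_border_le_mul_meanProdInv h.pos fun ω hω => ?_).trans
    (mul_le_mul_of_nonneg_left (ih.trans ?_) (inv_nonneg.2 (prob_nonneg _)))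
  · exact inv_anti₀ (prob_pos (E := fun z => V ≤ LinearMap.ker (lastRowDefect z)) hx)
      (h.prob_le_ker_lastRowDefect_le hω)
  · exact pow_le_pow_right₀ ha ((Submodule.finrank_map_le _ _).trans
      (Submodule.finrank_mono inf_le_left))

theorem mul_pow_add_pow_succ_le {a Q : ℝ} (ha : 0 ≤ a) (hQ : 0 ≤ Q) (d : ℕ) :
    Q * (a * Q) ^ d + (a * Q) ^ (d + 1) ≤ ((a + 1) * Q) ^ (d + 1) :=
  calc Q * (a * Q) ^ d + (a * Q) ^ (d + 1)
      = (a * Q) ^ d * ((a + 1) * Q) := by ring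
    _ ≤ ((a + 1) * Q) ^ d * ((a + 1) * Q) := by gcongr; linarith
    _ = ((a + 1) * Q) ^ (d + 1) := (pow_succ _ _).symm

theorem AtomBounded.expect_border_le_of_not_le_ker (h : AtomBounded Q V S u ρ) (hQ : 1 ≤ Q)
    (ha : 1 ≤ a) {x : Fin (n + 1) → Bool} {y : Fin n → Bool}
    (ih : meanProdInv (borderSlice S x y) (fun k ω => ρ k.castSucc (border ω x y))
      ≤ (a * Q) ^ Module.finrank ℝ ((V ⊓ LinearMap.ker (lastRowDefect x)).map (dropLast x)))
    (hx : ¬ V ≤ LinearMap.ker (lastRowDefect x)) :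
    𝔼 ω, (if border ω x y ∈ S then ∏ k, (ρ k (border ω x y))⁻¹ else 0)
      ≤ ((a + 1) * Q) ^ Module.finrank ℝ V - (a * Q) ^ Module.finrank ℝ V := by
  obtain ⟨p, hp, hpx⟩ := SetLike.not_le_iff_exists.1 hx
  have finrank_drop := finrank_inf_ker_add_one V (lastRowDefect x) ⟨p, hp, hpx⟩
  refine (expect_border_le_mul_meanProdInv h.pos fun ω hω => h.inv_le _ hω _).trans ?_
  calc Q * meanProdInv (borderSlice S x y) (fun k ω => ρ k.castSucc (border ω x y))
      ≤ Q * (a * Q) ^ Module.finrank ℝ ↥(V ⊓ LinearMap.ker (lastRowDefect x)) := by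
        refine mul_le_mul_of_nonneg_left (ih.trans ?_) (by linarith)
        exact pow_le_pow_right₀ (one_le_mul_of_one_le_of_one_le ha hQ)
          (Submodule.finrank_map_le _ _)
    _ ≤ _ := by
        rw [← finrank_drop]
        linarith [mul_pow_add_pow_succ_le (zero_le_one.trans ha) (zero_le_one.trans hQ)
          (Module.finrank ℝ ↥(V ⊓ LinearMap.ker (lastRowDefect x)))]

end Step

theorem expect_ite_inv_prob_mul_le {Ω : Type*} [Fintype Ω] (E : Ω → Prop) [DecidablePred E]
    {A : ℝ} (hA : 0 ≤ A) : 𝔼 x, (if E x then (prob E)⁻¹ * A else 0) ≤ A := by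
  calc 𝔼 x, (if E x then (prob E)⁻¹ * A else 0)
      = (prob E)⁻¹ * A * prob E := by
        rw [prob_eq_expect, mul_expect]
        simp only [mul_ite, mul_one, mul_zero]
    _ = (prob E)⁻¹ * prob E * A := by ring
    _ ≤ A := mul_le_of_le_one_left hA (inv_mul_le_one)

/-- Let `p` be the probability that the last row imposes no condition on `V`. In that case
`p ≤ ρ_last`, so the factor `p⁻¹` is paid for by the rarity of the case; otherwise the dimension of
`V` drops. -/
theorem AtomBounded.meanProdInv_le {Q : ℝ} (hQ : 1 ≤ Q)
    {V : Submodule ℝ ((Fin n → ℝ) × (Fin n → ℝ))} {S : Finset (Fin n → Fin n → Bool)}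
    {u : (Fin n → Fin n → Bool) → Fin n → ℝ} {ρ : Fin n → (Fin n → Fin n → Bool) → ℝ}
    (h : AtomBounded Q V S u ρ) : meanProdInv S ρ ≤ ((n + 1) * Q) ^ Module.finrank ℝ V := by
  classical
  induction n with
  | zero =>
    calc meanProdInv S ρ ≤ 𝔼 _ω : Fin 0 → Fin 0 → Bool, (1 : ℝ) :=
          expect_le_expect fun ω _ => by split_ifs <;> simp
      _ = 1 := expect_const univ_nonempty 1
      _ ≤ _ := one_le_pow₀ (by simpa using hQ)
  | succ n ih =>
    set d := Module.finrank ℝ V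
    set E : (Fin (n + 1) → Bool) → Prop := fun x => V ≤ LinearMap.ker (lastRowDefect x)
    have ha : (1 : ℝ) ≤ n + 1 := by simp
    have pow_mono : ((n + 1 : ℝ) * Q) ^ d ≤ ((n + 1 + 1) * Q) ^ d := by gcongr; linarith
    have row_le (x y) : 𝔼 ω, (if border ω x y ∈ S then ∏ k, (ρ k (border ω x y))⁻¹ else 0)
        ≤ (if E x then (prob E)⁻¹ * ((n + 1) * Q) ^ d else 0)
          + (((n + 1 + 1) * Q) ^ d - ((n + 1) * Q) ^ d) := by
      split_ifs with hx
      · exact (h.expect_border_le_of_le_ker (one_le_mul_of_one_le_of_one_le ha hQ)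
          (ih (h.slice x y)) hx).trans (le_add_of_nonneg_right (sub_nonneg.2 pow_mono))
      · rw [zero_add]
        exact h.expect_border_le_of_not_le_ker hQ ha (ih (h.slice x y)) hx
    rw [meanProdInv_eq_expect_border]
    calc _ ≤ 𝔼 x, 𝔼 _y : Fin n → Bool, ((if E x then (prob E)⁻¹ * ((n + 1) * Q) ^ d else 0)
          + (((n + 1 + 1) * Q) ^ d - ((n + 1) * Q) ^ d)) :=
          expect_le_expect fun x _ => expect_le_expect fun y _ => row_le x y
      _ = 𝔼 x, (if E x then (prob E)⁻¹ * ((n + 1) * Q) ^ d else 0)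
          + (((n + 1 + 1) * Q) ^ d - ((n + 1) * Q) ^ d) := by
        simp only [expect_const univ_nonempty, expect_add_distrib]
      _ ≤ ((n + 1) * Q) ^ d + (((n + 1 + 1) * Q) ^ d - ((n + 1) * Q) ^ d) := by
        gcongr
        exact expect_ite_inv_prob_mul_le E (by positivity)
      _ = _ := by push_cast; ring

end RowReveal

/-! ### Eigenvectors with prescribed properties -/

section Eigenvector

variable {n : ℕ}

/-- The event that the sign matrix has an eigenvector satisfying `P`. -/
def ExistsEigenvector (P : (Fin n → ℝ) → Prop) (ω : Fin n → Fin n → Bool) : Prop :=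
  ∃ l v, Module.End.HasEigenvector (toLin' (symMat ℝ ω)) l v ∧ P v

theorem prob_existsEigenvector_mono {P P' : (Fin n → ℝ) → Prop} (h : ∀ v, v ≠ 0 → P v → P' v) :
    prob (ExistsEigenvector P) ≤ prob (ExistsEigenvector P') :=
  prob_mono fun _ ⟨l, v, hv, hP⟩ => ⟨l, v, hv, h v hv.2 hP⟩

/-- The action of a permutation on index pairs that respects the orientation `i ≤ j`. -/
def relabelPair (σ : Equiv.Perm (Fin n)) (p : Fin n × Fin n) : Fin n × Fin n :=
  if p.1 ≤ p.2 then (min (σ p.1) (σ p.2), max (σ p.1) (σ p.2))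
  else (max (σ p.1) (σ p.2), min (σ p.1) (σ p.2))

theorem relabelPair_symm_relabelPair (σ : Equiv.Perm (Fin n)) (p : Fin n × Fin n) :
    relabelPair σ.symm (relabelPair σ p) = p := by
  obtain ⟨i, j⟩ := p
  rcases le_or_gt i j with hij | hij
  · rcases le_total (σ i) (σ j) with h | h <;> simp [relabelPair, hij, h]
  · have hne : σ i ≠ σ j := σ.injective.ne hij.ne'
    rcases hne.lt_or_gt with h | h <;> simp [relabelPair, hij.not_ge, h.le, h.not_ge, hij.le]

/-- Simultaneous relabelling of rows and columns, acting on samples. -/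
def relabelEquiv (σ : Equiv.Perm (Fin n)) : (Fin n → Fin n → Bool) ≃ (Fin n → Fin n → Bool) where
  toFun ω i j := ω (relabelPair σ (i, j)).1 (relabelPair σ (i, j)).2
  invFun ω i j := ω (relabelPair σ.symm (i, j)).1 (relabelPair σ.symm (i, j)).2
  left_inv ω := by
    funext i j
    simpa using congrArg (fun p => ω p.1 p.2) (relabelPair_symm_relabelPair σ.symm (i, j))
  right_inv ω := by
    funext i j
    exact congrArg (fun p => ω p.1 p.2) (relabelPair_symm_relabelPair σ (i, j))

theorem symMat_relabelEquiv (σ : Equiv.Perm (Fin n)) (ω : Fin n → Fin n → Bool) :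
    symMat ℝ (relabelEquiv σ ω) = (symMat ℝ ω).submatrix σ σ := by
  ext i j
  rcases le_total i j with h | h <;>
    simp [symMat, relabelEquiv, relabelPair, h, min_comm (σ j), max_comm (σ j)]

theorem prob_existsEigenvector_le_comp_symm (σ : Equiv.Perm (Fin n)) (P : (Fin n → ℝ) → Prop) :
    prob (ExistsEigenvector P) ≤ prob (ExistsEigenvector fun v => P (v ∘ σ.symm)) := by
  rw [← prob_comp_equiv (relabelEquiv σ) (ExistsEigenvector fun v => P (v ∘ σ.symm))]
  refine prob_mono fun ω ⟨l, v, hv, hP⟩ => ⟨l, v ∘ σ, ?_, by simpa [Function.comp_assoc] using hP⟩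
  rw [Module.End.hasEigenvector_iff, Module.End.mem_eigenspace_iff] at hv ⊢
  refine ⟨?_, fun h0 => hv.2 (σ.surjective.injective_comp_right h0)⟩
  rw [toLin'_apply] at hv ⊢
  rw [symMat_relabelEquiv, submatrix_mulVec_equiv, Function.comp_assoc, Equiv.self_comp_symm,
    Function.comp_id, hv.1]
  rfl

theorem exists_perm_mem_iff_lt_card (S : Finset (Fin n)) :
    ∃ σ : Equiv.Perm (Fin n), ∀ i, σ i ∈ S ↔ (i : ℕ) < #S := by
  have hcard : Fintype.card {i : Fin n // (i : ℕ) < #S} = Fintype.card {i // i ∈ S} := by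
    rw [Fintype.card_subtype, Fintype.card_coe, Fin.card_filter_val_lt, min_eq_right]
    simpa using S.card_le_univ
  let e := Fintype.equivOfCardEq hcard
  refine ⟨e.extendSubtype, fun i => ⟨fun h => ?_, e.extendSubtype_mem i⟩⟩
  by_contra hi
  exact e.extendSubtype_not_mem i hi h

theorem meanProdInv_le_of_eigenvector {Q : ℝ} (hQ : 1 ≤ Q) {U : Submodule ℝ (Fin n → ℝ)}
    {S : Finset (Fin n → Fin n → Bool)} {v : (Fin n → Fin n → Bool) → Fin n → ℝ}
    {l : (Fin n → Fin n → Bool) → ℝ} {ρ : Fin n → (Fin n → Fin n → Bool) → ℝ}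
    (hv : ∀ ω ∈ S, toLin' (symMat ℝ ω) (v ω) = l ω • v ω) (hU : ∀ ω ∈ S, v ω ∈ U)
    (pos : ∀ ω ∈ S, ∀ k, 0 < ρ k ω) (inv_le : ∀ ω ∈ S, ∀ k, (ρ k ω)⁻¹ ≤ Q)
    (prob_le : ∀ ω ∈ S, ∀ k a,
      prob (fun x : Fin n → Bool => ∑ i ∈ Iic k, signb ℝ (x i) * v ω i = a) ≤ ρ k ω) :
    meanProdInv S ρ ≤ ((n + 1) * Q) ^ (2 * Module.finrank ℝ U) := by
  have prod_eq_range : U.prod U = LinearMap.range (U.subtype.prodMap U.subtype) := by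
    rw [LinearMap.range_prodMap, U.range_subtype]
  have finrank_prod : Module.finrank ℝ (U.prod U) = 2 * Module.finrank ℝ U := by
    rw [prod_eq_range, LinearMap.finrank_range_of_inj (U.injective_subtype.prodMap
      U.injective_subtype), Module.finrank_prod, two_mul]
  have atomBounded : AtomBounded Q (U.prod U) S v ρ :=
    { mem := fun ω hω => ⟨hU ω hω, by
        rw [← toLin'_apply, hv ω hω]
        exact U.smul_mem (l ω) (hU ω hω)⟩
      pos, inv_le, prob_le }
  exact finrank_prod ▸ atomBounded.meanProdInv_le hQ

end Eigenvector

/-! ### Eigenvectors of small support -/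

section Sparse

variable {n k : ℕ}

theorem meanProdInv_const (E : (Fin n → Fin n → Bool) → Prop) [DecidablePred E] (r : Fin n → ℝ) :
    meanProdInv {ω | E ω} (fun i _ => r i) = prob E * ∏ i, (r i)⁻¹ := by
  rw [meanProdInv, prob_eq_expect, expect_mul]
  simp only [mem_filter_univ, ite_mul, one_mul, zero_mul]

theorem prob_sum_signb_Iic_le_three_quarters {v : Fin n → ℝ} (hv : v ≠ 0)
    (hmem : v ∈ Pi.spanSubset ℝ {i : Fin n | (i : ℕ) < k}) {i : Fin n} (hi : k ≤ i) (a : ℝ) :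
    prob (fun x : Fin n → Bool => ∑ j ∈ Iic i, signb ℝ (x j) * v j = a) ≤ 3 / 4 := by
  obtain ⟨i₀, hi₀⟩ := Function.ne_iff.1 hv
  have hlt : (i₀ : ℕ) < k := by
    by_contra h
    exact hi₀ (Pi.mem_spanSubset_iff.1 hmem i₀ h)
  exact (prob_sum_signb_le_zeroProb v (Iic i) a).trans
    (zeroProb_quarterOn_le_three_quarters (mem_Iic.2 (Fin.le_def.2 (by omega))) hi₀)

theorem prob_existsEigenvector_mem_spanSubset_le (hk : k ≤ n) :
    prob (ExistsEigenvector fun v => v ∈ Pi.spanSubset ℝ {i : Fin n | (i : ℕ) < k})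
      ≤ ((n + 1) * 2) ^ (2 * k) * (3 / 4) ^ (n - k) := by
  classical
  set E : (Fin n → Fin n → Bool) → Prop :=
    ExistsEigenvector fun v => v ∈ Pi.spanSubset ℝ {i : Fin n | (i : ℕ) < k}
  let r (i : Fin n) : ℝ := if (i : ℕ) < k then 1 else 3 / 4
  have exists_eigenvector : ∀ ω ∈ ({ω | E ω} : Finset _), ∃ l v,
      Module.End.HasEigenvector (toLin' (symMat ℝ ω)) l v ∧
        v ∈ Pi.spanSubset ℝ {i : Fin n | (i : ℕ) < k} := fun ω hω => (mem_filter_univ ω).1 hω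
  choose! l v hv hmem using exists_eigenvector
  have atom_le : ∀ ω ∈ ({ω | E ω} : Finset _), ∀ i a,
      prob (fun x : Fin n → Bool => ∑ j ∈ Iic i, signb ℝ (x j) * v ω j = a) ≤ r i := by
    intro ω hω i a
    by_cases hi : (i : ℕ) < k
    · simpa [r, hi] using prob_le_one _
    · simpa only [r, hi, if_false] using
        prob_sum_signb_Iic_le_three_quarters (hv ω hω).2 (hmem ω hω) (not_lt.1 hi) a
  have mean_le := meanProdInv_le_of_eigenvector one_le_two (ρ := fun i _ => r i)
    (fun ω hω => (hv ω hω).apply_eq_smul) hmem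
    (fun _ _ i => by simp only [r]; split_ifs <;> norm_num)
    (fun _ _ i => by simp only [r]; split_ifs <;> norm_num) atom_le
  have prod_inv : ∏ i, (r i)⁻¹ = ((3 / 4) ^ (n - k))⁻¹ := by
    obtain ⟨m, rfl⟩ := Nat.exists_eq_add_of_le hk
    simp [r, Fin.prod_univ_add, div_pow]
  have ncard_lt : {i : Fin n | (i : ℕ) < k}.ncard = k := by
    rw [Set.ncard_eq_toFinset_card', Set.toFinset_ofPred, Fin.card_filter_val_lt, min_eq_right hk]
  rwa [meanProdInv_const, prod_inv, Pi.dim_spanSubset, ncard_lt, ← div_eq_mul_inv,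
    div_le_iff₀ (by positivity)] at mean_le

theorem prob_existsEigenvector_card_support_le (hk : k ≤ n) :
    prob (ExistsEigenvector fun v : Fin n → ℝ => #{i | v i ≠ 0} ≤ k)
      ≤ n ^ k * (((n + 1) * 2) ^ (2 * k) * (3 / 4) ^ (n - k)) := by
  have supported_le : ∀ S ∈ powersetCard k (univ : Finset (Fin n)),
      prob (ExistsEigenvector fun v => v ∈ Pi.spanSubset ℝ (S : Set (Fin n)))
        ≤ ((n + 1) * 2) ^ (2 * k) * (3 / 4) ^ (n - k) := by
    intro S hS
    obtain ⟨σ, hσ⟩ := exists_perm_mem_iff_lt_card S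
    rw [(mem_powersetCard_univ.1 hS)] at hσ
    refine ((prob_existsEigenvector_le_comp_symm σ _).trans
      (prob_existsEigenvector_mono fun v _ hv => ?_)).trans
        (prob_existsEigenvector_mem_spanSubset_le hk)
    rw [Pi.mem_spanSubset_iff] at hv ⊢
    intro i hi
    simpa using hv (σ i) (mt (hσ i).1 hi)
  calc prob (ExistsEigenvector fun v : Fin n → ℝ => #{i | v i ≠ 0} ≤ k)
      ≤ prob (fun ω => ∃ S ∈ powersetCard k (univ : Finset (Fin n)),
          ExistsEigenvector (fun v => v ∈ Pi.spanSubset ℝ (S : Set (Fin n))) ω) := by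
        refine prob_mono fun ω ⟨l, v, hv, hcard⟩ => ?_
        obtain ⟨S, hS, -, hSk⟩ := exists_subsuperset_card_eq (subset_univ _) hcard (by simpa)
        refine ⟨S, mem_powersetCard_univ.2 hSk, l, v, hv, Pi.mem_spanSubset_iff.2 fun i hi => ?_⟩
        by_contra hvi
        exact hi (hS ((mem_filter_univ i).2 hvi))
    _ ≤ ∑ S ∈ powersetCard k (univ : Finset (Fin n)),
          prob (ExistsEigenvector fun v => v ∈ Pi.spanSubset ℝ (S : Set (Fin n))) :=
        prob_exists_mem_le _ _
    _ ≤ n.choose k * (((n + 1) * 2) ^ (2 * k) * (3 / 4) ^ (n - k)) := by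
        refine (sum_le_card_nsmul _ _ _ supported_le).trans_eq ?_
        rw [card_powersetCard, card_univ, Fintype.card_fin, nsmul_eq_mul]
    _ ≤ _ := by
        gcongr
        exact_mod_cast n.choose_le_pow k

end Sparse

/-! ### Structured eigenvectors -/

section Prefix

theorem zeroProb_comp_perm {ι : Type*} [Fintype ι] [DecidableEq ι] (σ : Equiv.Perm ι)
    (μ v : ι → ℝ) : zeroProb (μ ∘ σ) (v ∘ σ) = zeroProb μ v := by
  classical
  simp only [zeroProb, lazyProb, sum_filter]
  refine Fintype.sum_equiv (σ.arrowCongr (Equiv.refl SignType)) _ _ fun Y => ?_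
  have weight_eq :
      walkWeight (μ ∘ σ) Y = walkWeight μ (σ.arrowCongr (Equiv.refl SignType) Y) :=
    Fintype.prod_equiv σ _ _ fun i => by simp
  have dotProduct_eq :
      signVec Y ⬝ᵥ v ∘ σ = signVec (σ.arrowCongr (Equiv.refl SignType) Y) ⬝ᵥ v :=
    Fintype.sum_equiv σ _ _ fun i => by simp [signVec]
  rw [weight_eq, dotProduct_eq]

variable {n l l' : ℕ}

/-- The indices less than `l`. -/
def initialSegment (n l : ℕ) : Finset (Fin n) := {i | (i : ℕ) < l}

theorem card_initialSegment (h : l ≤ n) : #(initialSegment n l) = l := by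
  rw [initialSegment, Fin.card_filter_val_lt, min_eq_right h]

/-- The atom probability of the restriction of `v` to its first `l` coordinates, with laziness
`1/4`. -/
def prefixZeroProb (l : ℕ) (v : Fin n → ℝ) : ℝ := zeroProb (quarterOn (initialSegment n l)) v

theorem prefixZeroProb_anti (h : l ≤ l') (v : Fin n → ℝ) :
    prefixZeroProb l' v ≤ prefixZeroProb l v :=
  zeroProb_quarterOn_anti (monotone_filter_right _ fun _ _ hi => hi.trans_le h) v

theorem prefixZeroProb_le_one (l : ℕ) (v : Fin n → ℝ) : prefixZeroProb l v ≤ 1 :=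
  zeroProb_le_one (quarterOn_nonneg _) (fun i => (quarterOn_le _ i).trans (by norm_num)) v

theorem prefixZeroProb_self (v : Fin n → ℝ) : prefixZeroProb n v = zeroProb (fun _ => 1 / 4) v := by
  have : quarterOn (initialSegment n n) = fun _ => 1 / 4 := by
    ext i
    simp [quarterOn, initialSegment]
  rw [prefixZeroProb, this]

end Prefix

section Structured

variable {n E j s D k g : ℕ} {v : Fin n → ℝ}

/-- A vector whose atom probability is at least `2⁻ᴱ`, is not much larger on the first half of the
coordinates than on a random half, and rises by a factor of order `j` when the laziness is lowered
from `1/8` to `1/(32 j³)`. -/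
structure IsStructured (E j : ℕ) (v : Fin n → ℝ) : Prop where
  half_pow_le : (1 / 2) ^ E ≤ zeroProb (fun _ => 1 / 4) v
  prefix_half_le : prefixZeroProb (n / 2) v ≤ 2 * zeroProb (fun _ => 1 / 8) v
  gain : zeroProb (fun _ => 1 / 8) v ≤ 5 / j * zeroProb (fun _ => 1 / (32 * (j : ℝ) ^ 3)) v

theorem IsStructured.half_pow_le_prefix (h : IsStructured E j v) {l : ℕ} (hl : l ≤ n) :
    (1 / 2) ^ E ≤ prefixZeroProb l v :=
  h.half_pow_le.trans_eq (prefixZeroProb_self v).symm |>.trans (prefixZeroProb_anti hl v)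

theorem IsStructured.prefix_pos (h : IsStructured E j v) {l : ℕ} (hl : l ≤ n) :
    0 < prefixZeroProb l v :=
  (by positivity : (0 : ℝ) < (1 / 2) ^ E).trans_le (h.half_pow_le_prefix hl)

/-- The laziness of the random hyperplane in step `k` of the greedy intersection: it tests the
first `s + k + 1` coordinates until half of them are reached, then all coordinates with low
laziness, and in the last `D` steps, where the low laziness would not escape the remaining
subspace, all coordinates with laziness `1/8`. -/
def stepWeight (n s D j k : ℕ) : Fin n → ℝ :=
  if s + k < n / 2 then quarterOn (initialSegment n (s + k + 1))
  else if k + D < n then fun _ => 1 / (32 * (j : ℝ) ^ 3)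
  else fun _ => 1 / 8

/-- The factor gained over the trivial bound in step `k` of the greedy intersection. -/
def stepGain (n s D j k : ℕ) : ℝ := if n / 2 ≤ s + k ∧ k + D < n then j / 5 else 1

theorem lazyRate_le (hj : 0 < j) : 1 / (32 * (j : ℝ) ^ 3) ≤ 1 / 32 := by
  have : (1 : ℝ) ≤ (j : ℝ) ^ 3 := one_le_pow₀ (by exact_mod_cast hj)
  exact one_div_le_one_div_of_le (by norm_num) (by linarith)

theorem stepWeight_nonneg (n s D j k : ℕ) (i : Fin n) : 0 ≤ stepWeight n s D j k i := by
  unfold stepWeight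
  split_ifs
  · exact quarterOn_nonneg _ i
  · positivity
  · norm_num

theorem stepWeight_le_quarter (hj : 0 < j) (i : Fin n) : stepWeight n s D j k i ≤ 1 / 4 := by
  unfold stepWeight
  split_ifs
  · exact quarterOn_le _ i
  · exact (lazyRate_le hj).trans (by norm_num)
  · norm_num

theorem one_le_stepGain (hj : 5 ≤ j) (n s D k : ℕ) : 1 ≤ stepGain n s D j k := by
  have : (5 : ℝ) ≤ j := by exact_mod_cast hj
  unfold stepGain
  split_ifs
  · linarith
  · exact le_rfl

theorem IsStructured.prefix_mul_stepGain_le (h : IsStructured E j v) (hj : 0 < j)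
    (hk : s + k + 1 ≤ n) :
    prefixZeroProb (s + k + 1) v * stepGain n s D j k ≤ 2 * zeroProb (stepWeight n s D j k) v := by
  have hj' : (0 : ℝ) < j := by exact_mod_cast hj
  unfold stepWeight stepGain
  by_cases half : s + k < n / 2
  · rw [if_pos half, if_neg fun hc => hc.1.not_gt half, mul_one]
    exact le_mul_of_one_le_left (h.prefix_pos hk).le one_le_two
  · have prefix_le : prefixZeroProb (s + k + 1) v ≤ 2 * zeroProb (fun _ => 1 / 8) v :=
      (prefixZeroProb_anti (by omega) v).trans h.prefix_half_le
    rw [if_neg half]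
    by_cases low : k + D < n
    · rw [if_pos low, if_pos ⟨not_lt.1 half, low⟩]
      calc prefixZeroProb (s + k + 1) v * (j / 5)
          ≤ 2 * (5 / j * zeroProb (fun _ => 1 / (32 * (j : ℝ) ^ 3)) v) * (j / 5) := by
            gcongr
            exact prefix_le.trans (by linarith [h.gain])
        _ = 2 * zeroProb (fun _ => 1 / (32 * (j : ℝ) ^ 3)) v := by field_simp [hj'.ne']
    · rwa [if_neg low, if_neg fun hc => low hc.2, mul_one]

theorem orthProb_stepWeight_le (hj : 0 < j) (hs : (7 / 8) ^ s ≤ (1 / 2 : ℝ) ^ (E + 1))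
    (hD : (1 - 1 / (32 * (j : ℝ) ^ 3)) ^ D ≤ (1 / 2) ^ (E + 1)) (hk : s + k ≤ n)
    {U : Submodule ℝ (Fin n → ℝ)} (hU : Module.finrank ℝ U + k = n) :
    orthProb (stepWeight n s D j k) U ≤ (1 / 2) ^ (E + 1) := by
  unfold stepWeight
  split_ifs with half low
  · refine (orthProb_quarterOn_le (e := s) ?_).trans (le_trans ?_ hs)
    · rw [Fintype.card_fin, card_initialSegment (by omega)]
      omega
    · exact pow_le_pow_left₀ (by norm_num) (by norm_num) s
  · exact (orthProb_const_le (by positivity) ((lazyRate_le hj).trans (by norm_num))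
      (by omega)).trans hD
  · refine (orthProb_const_le (e := s) (by norm_num) (by norm_num) (by omega)).trans
      (le_trans ?_ hs)
    norm_num

theorem IsStructured.le_zeroProb_sub_orthProb (h : IsStructured E j v) (hj : 0 < j)
    (hs : (7 / 8) ^ s ≤ (1 / 2 : ℝ) ^ (E + 1))
    (hD : (1 - 1 / (32 * (j : ℝ) ^ 3)) ^ D ≤ (1 / 2) ^ (E + 1)) (hk : s + k + 1 ≤ n)
    {U : Submodule ℝ (Fin n → ℝ)} (hU : Module.finrank ℝ U + k = n) :
    prefixZeroProb (s + k + 1) v * stepGain n s D j k / 4 ≤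
      zeroProb (stepWeight n s D j k) v - orthProb (stepWeight n s D j k) U := by
  have le_zeroProb : (1 / 2) ^ E ≤ zeroProb (stepWeight n s D j k) v :=
    h.half_pow_le.trans (zeroProb_anti (stepWeight_le_quarter hj) (fun _ => by norm_num) v)
  have orth_le := orthProb_stepWeight_le hj hs hD (by omega) hU
  rw [pow_succ] at orth_le
  linarith [h.prefix_mul_stepGain_le (D := D) hj hk]

theorem prod_inv_stepGain_le (hj : 5 ≤ j) (hsD : s ≤ D) (hg : g + D + n / 2 ≤ n) :
    ∏ k ∈ range (n - s), (stepGain n s D j k)⁻¹ ≤ (5 / j) ^ g := by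
  have hj' : (5 : ℝ) ≤ j := by exact_mod_cast hj
  have gaining_subset : Ico (n / 2 - s) (n - D) ⊆ range (n - s) := fun k hk => by
    simp only [mem_Ico, mem_range] at hk ⊢
    omega
  have inv_nonneg (k : ℕ) : 0 ≤ (stepGain n s D j k)⁻¹ :=
    inv_nonneg.2 (zero_le_one.trans (one_le_stepGain hj n s D k))
  calc ∏ k ∈ range (n - s), (stepGain n s D j k)⁻¹
      ≤ ∏ k ∈ Ico (n / 2 - s) (n - D), (stepGain n s D j k)⁻¹ := by
        rw [← prod_sdiff gaining_subset]
        exact mul_le_of_le_one_left (prod_nonneg fun k _ => inv_nonneg k)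
          (prod_le_one (fun k _ => inv_nonneg k)
            fun k _ => inv_le_one_of_one_le₀ (one_le_stepGain hj n s D k))
    _ = (5 / j) ^ #(Ico (n / 2 - s) (n - D)) := by
        refine prod_eq_pow_card fun k hk => ?_
        rw [mem_Ico] at hk
        rw [stepGain, if_pos (by omega), inv_div]
    _ ≤ (5 / j) ^ g := by
        rw [Nat.card_Ico]
        exact pow_le_pow_of_le_one (by positivity) ((div_le_one (by linarith)).2 hj') (by omega)

theorem prod_range_shift_le_prod_range {f : ℕ → ℝ} {m : ℕ} (hf : ∀ k < s + m, 1 ≤ f k) :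
    ∏ k ∈ range m, f (s + k) ≤ ∏ k ∈ range (s + m), f k := by
  rw [prod_range_add]
  refine le_mul_of_one_le_left (prod_nonneg fun k hk => ?_) (one_le_prod fun k hk => ?_)
  · have := mem_range.1 hk
    linarith [hf (s + k) (by omega)]
  · exact hf k (by have := mem_range.1 hk; omega)

theorem IsStructured.prod_inv_le (h : IsStructured E j v) (hj : 5 ≤ j) (hsD : s ≤ D)
    (hsn : s ≤ n) (hg : g + D + n / 2 ≤ n) :
    ∏ k ∈ range (n - s), (prefixZeroProb (s + k + 1) v * stepGain n s D j k / 4)⁻¹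
      ≤ 4 ^ n * (5 / j) ^ g * ∏ k : Fin n, (prefixZeroProb (k + 1) v)⁻¹ := by
  have one_le_inv {k : ℕ} (hk : k < n) : 1 ≤ (prefixZeroProb (k + 1) v)⁻¹ :=
    (one_le_inv₀ (h.prefix_pos hk)).2 (prefixZeroProb_le_one _ v)
  have prefix_prod_le : ∏ k ∈ range (n - s), (prefixZeroProb (s + k + 1) v)⁻¹ ≤
      ∏ k : Fin n, (prefixZeroProb (k + 1) v)⁻¹ := by
    rw [Fin.prod_univ_eq_prod_range (fun k => (prefixZeroProb (k + 1) v)⁻¹) n]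
    have := prod_range_shift_le_prod_range (f := fun k => (prefixZeroProb (k + 1) v)⁻¹)
      (s := s) (m := n - s) fun k hk => one_le_inv (by omega)
    rwa [Nat.add_sub_cancel' hsn] at this
  have split_factor (k : ℕ) : (prefixZeroProb (s + k + 1) v * stepGain n s D j k / 4)⁻¹ =
      4 * (stepGain n s D j k)⁻¹ * (prefixZeroProb (s + k + 1) v)⁻¹ := by
    rw [inv_div, div_eq_mul_inv, mul_inv]
    ring
  simp_rw [split_factor, prod_mul_distrib, prod_const, card_range]
  have prefix_prod_nonneg : 0 ≤ ∏ k ∈ range (n - s), (prefixZeroProb (s + k + 1) v)⁻¹ :=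
    prod_nonneg fun k hk => zero_le_one.trans (one_le_inv (by have := mem_range.1 hk; omega))
  gcongr
  · exact prod_nonneg fun k _ => inv_nonneg.2 (zero_le_one.trans (one_le_stepGain hj n s D k))
  · norm_num
  · omega
  · exact prod_inv_stepGain_le hj hsD hg

theorem prob_sum_signb_Iic_le_prefixZeroProb (v : Fin n → ℝ) (i : Fin n) (a : ℝ) :
    prob (fun x : Fin n → Bool => ∑ j ∈ Iic i, signb ℝ (x j) * v j = a) ≤
      prefixZeroProb (i + 1) v := by
  have : Iic i = initialSegment n (i + 1) := by
    ext j
    rw [initialSegment, mem_filter_univ, mem_Iic, Fin.le_def, Nat.lt_succ_iff]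
  rw [prefixZeroProb, ← this]
  exact prob_sum_signb_le_zeroProb v _ a

open Classical in
theorem meanProdInv_prefixZeroProb_le {S : Finset (Fin n → Fin n → Bool)}
    {l : (Fin n → Fin n → Bool) → ℝ} {v : (Fin n → Fin n → Bool) → Fin n → ℝ}
    (hv : ∀ ω ∈ S, Module.End.HasEigenvector (toLin' (symMat ℝ ω)) (l ω) (v ω))
    (hstr : ∀ ω ∈ S, IsStructured E j (v ω)) (U : Submodule ℝ (Fin n → ℝ)) :
    meanProdInv (n := n) {ω ∈ S | v ω ∈ U} (fun k ω => prefixZeroProb (k + 1) (v ω))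
      ≤ ((n + 1) * 2 ^ E) ^ (2 * Module.finrank ℝ U) := by
  refine meanProdInv_le_of_eigenvector (one_le_pow₀ one_le_two)
    (fun ω hω => (hv ω (mem_filter.1 hω).1).apply_eq_smul) (fun ω hω => (mem_filter.1 hω).2)
    (fun ω hω k => (hstr ω (mem_filter.1 hω).1).prefix_pos (by omega)) (fun ω hω k => ?_)
    (fun ω _ k a => prob_sum_signb_Iic_le_prefixZeroProb (v ω) k a)
  have := inv_anti₀ (by positivity) ((hstr ω (mem_filter.1 hω).1).half_pow_le_prefix k.is_lt)
  simpa using this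

theorem prob_existsEigenvector_isStructured_le (hj : 5 ≤ j)
    (hs : (7 / 8) ^ s ≤ (1 / 2 : ℝ) ^ (E + 1))
    (hD : (1 - 1 / (32 * (j : ℝ) ^ 3)) ^ D ≤ (1 / 2) ^ (E + 1)) (hsD : s ≤ D) (hsn : s ≤ n)
    (hg : g + D + n / 2 ≤ n) :
    prob (ExistsEigenvector (IsStructured (n := n) E j))
      ≤ 4 ^ n * (5 / j) ^ g * ((n + 1) * 2 ^ E) ^ (2 * s) := by
  classical
  set S : Finset (Fin n → Fin n → Bool) := {ω | ExistsEigenvector (IsStructured E j) ω} with hS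
  have exists_eigenvector : ∀ ω ∈ S, ∃ l v,
      Module.End.HasEigenvector (toLin' (symMat ℝ ω)) l v ∧ IsStructured E j v :=
    fun ω hω => (mem_filter_univ ω).1 hω
  choose! l v hv hstr using exists_eigenvector
  rcases S.eq_empty_or_nonempty with hempty | hne
  · rw [prob_eq_zero fun ω hω => filter_eq_empty_iff.1 hempty (mem_univ ω) hω]
    positivity
  obtain ⟨U, hU, hcard⟩ := exists_submodule_card_le_sum hne (v := v) (K := n - s)
    (stepWeight_nonneg n s D j)
    (fun k i => (stepWeight_le_quarter (by omega) i).trans (by norm_num))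
    (q := fun k ω => prefixZeroProb (s + k + 1) (v ω) * stepGain n s D j k / 4)
    (fun k hk ω hω => div_pos (mul_pos ((hstr ω hω).prefix_pos (by omega))
      (zero_lt_one.trans_le (one_le_stepGain hj n s D k))) four_pos)
    (fun k hk U hU ω hω _ => (hstr ω hω).le_zeroProb_sub_orthProb (by omega) hs hD (by omega)
      (hU.trans (Fintype.card_fin n)))
  have finrank_U : Module.finrank ℝ U = s := by
    rw [Fintype.card_fin] at hU
    omega
  calc prob (ExistsEigenvector (IsStructured E j))
      = #S / Fintype.card (Fin n → Fin n → Bool) := by rw [prob, hS]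
    _ ≤ (∑ ω ∈ S with v ω ∈ U, 4 ^ n * (5 / j) ^ g * ∏ k : Fin n, (prefixZeroProb (k + 1) (v ω))⁻¹)
          / Fintype.card (Fin n → Fin n → Bool) := by
        gcongr
        exact hcard.trans (sum_le_sum fun ω hω =>
          (hstr ω (mem_filter.1 hω).1).prod_inv_le hj hsD hsn hg)
    _ = 4 ^ n * (5 / j) ^ g *
          meanProdInv (n := n) {ω ∈ S | v ω ∈ U} fun k ω => prefixZeroProb (k + 1) (v ω) := by
        rw [meanProdInv, Fintype.expect_eq_sum_div_card, sum_ite_mem, univ_inter, ← mul_sum,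
          mul_div_assoc]
    _ ≤ 4 ^ n * (5 / j) ^ g * ((n + 1) * 2 ^ E) ^ (2 * s) := by
        gcongr
        exact finrank_U ▸ meanProdInv_prefixZeroProb_le hv hstr U

end Structured

section Nonsparse

variable {n E j g : ℕ}

theorem seven_eighths_pow_le (E : ℕ) : (7 / 8) ^ (6 * (E + 1)) ≤ (1 / 2 : ℝ) ^ (E + 1) := by
  rw [pow_mul]
  exact pow_le_pow_left₀ (by norm_num) (by norm_num) _

theorem one_sub_one_div_pow_le {N : ℕ} (hN : 0 < N) : (1 - 1 / N : ℝ) ^ N ≤ 1 / 2 := by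
  have hN' : (1 : ℝ) ≤ N := by exact_mod_cast hN
  calc (1 - 1 / N : ℝ) ^ N ≤ Real.exp (-(1 / N)) ^ N := by
        refine pow_le_pow_left₀ (sub_nonneg.2 ((div_le_one (by linarith)).2 hN')) ?_ _
        linarith [Real.add_one_le_exp (-(1 / N : ℝ))]
    _ = Real.exp (-1) := by
        rw [← Real.exp_nat_mul]
        congr 1
        field_simp
    _ ≤ 1 / 2 := by
        rw [Real.exp_neg, one_div]
        exact inv_anti₀ two_pos (by linarith [Real.add_one_le_exp (1 : ℝ)])

theorem one_sub_lazyRate_pow_le (hj : 0 < j) (E : ℕ) :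
    (1 - 1 / (32 * (j : ℝ) ^ 3)) ^ (32 * j ^ 3 * (E + 1)) ≤ (1 / 2) ^ (E + 1) := by
  have base := one_sub_one_div_pow_le (N := 32 * j ^ 3) (by positivity)
  have base_nonneg : 0 ≤ 1 - 1 / (32 * (j : ℝ) ^ 3) := by linarith [lazyRate_le hj]
  push_cast at base
  rw [pow_mul]
  exact pow_le_pow_left₀ (pow_nonneg base_nonneg _) base _

theorem prob_existsEigenvector_nonsparse_le_of_half (hj : 5 ≤ j) (hn : 6 * (E + 1) ≤ n)
    (hg : g + 32 * j ^ 3 * (E + 1) + n / 2 ≤ n) {J : Finset (Fin n)} (hJ : #J = n / 2) :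
    prob (ExistsEigenvector fun v : Fin n → ℝ => (1 / 2) ^ E ≤ zeroProb (fun _ => 1 / 4) v ∧
        zeroProb (quarterOn J) v ≤ 2 * zeroProb (fun _ => 1 / 8) v ∧
        zeroProb (fun _ => 1 / 8) v ≤ 5 / j * zeroProb (fun _ => 1 / (32 * (j : ℝ) ^ 3)) v)
      ≤ 4 ^ n * (5 / j) ^ g * ((n + 1) * 2 ^ E) ^ (2 * (6 * (E + 1))) := by
  have one_le_cube : 1 ≤ j ^ 3 := Nat.one_le_pow _ _ (by omega)
  obtain ⟨σ, hσ⟩ := exists_perm_mem_iff_lt_card J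
  refine ((prob_existsEigenvector_le_comp_symm σ _).trans
    (prob_existsEigenvector_mono fun v _ ⟨large, half, gain⟩ => ?_)).trans
      (prob_existsEigenvector_isStructured_le hj (seven_eighths_pow_le E)
        (one_sub_lazyRate_pow_le (by omega) E) (Nat.mul_le_mul_right _ (by omega)) hn hg)
  have relabel (μ : Fin n → ℝ) : zeroProb μ (v ∘ σ.symm) = zeroProb (μ ∘ σ) v := by
    rw [← zeroProb_comp_perm σ μ, Function.comp_assoc, Equiv.symm_comp_self, Function.comp_id]
  have quarterOn_comp : quarterOn J ∘ σ = quarterOn (initialSegment n (n / 2)) := by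
    ext i
    simp [quarterOn, initialSegment, hσ, hJ]
  rw [relabel] at large
  rw [relabel, relabel, quarterOn_comp] at half
  rw [relabel, relabel] at gain
  exact ⟨large, half, gain⟩

theorem prob_existsEigenvector_nonsparse_le (hj : 5 ≤ j) (hn : 6 * (E + 1) ≤ n)
    (hg : g + 32 * j ^ 3 * (E + 1) + n / 2 ≤ n) :
    prob (ExistsEigenvector fun v : Fin n → ℝ => (1 / 2) ^ E ≤ zeroProb (fun _ => 1 / 4) v ∧
        16 * j ^ 3 < #{i | v i ≠ 0})
      ≤ 8 ^ n * (5 / j) ^ g * ((n + 1) * 2 ^ E) ^ (2 * (6 * (E + 1))) := by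
  let P (J : Finset (Fin n)) (v : Fin n → ℝ) : Prop := (1 / 2) ^ E ≤ zeroProb (fun _ => 1 / 4) v ∧
    zeroProb (quarterOn J) v ≤ 2 * zeroProb (fun _ => 1 / 8) v ∧
    zeroProb (fun _ => 1 / 8) v ≤ 5 / j * zeroProb (fun _ => 1 / (32 * (j : ℝ) ^ 3)) v
  calc prob (ExistsEigenvector fun v : Fin n → ℝ => (1 / 2) ^ E ≤ zeroProb (fun _ => 1 / 4) v ∧
          16 * j ^ 3 < #{i | v i ≠ 0})
      ≤ prob fun ω => ∃ J ∈ powersetCard (n / 2) univ, ExistsEigenvector (P J) ω := by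
        refine prob_mono fun ω ⟨l, v, hv, large, hsupp⟩ => ?_
        obtain ⟨J, hcard, hJ⟩ := exists_card_eq_half_zeroProb_le v
        rw [Fintype.card_fin] at hcard
        exact ⟨J, mem_powersetCard_univ.2 hcard, l, v, hv, large, hJ,
          zeroProb_eighth_le (by omega) hsupp⟩
    _ ≤ ∑ J ∈ powersetCard (n / 2) univ, prob (ExistsEigenvector (P J)) := prob_exists_mem_le _ _
    _ ≤ n.choose (n / 2) *
          (4 ^ n * (5 / j) ^ g * ((n + 1) * 2 ^ E) ^ (2 * (6 * (E + 1)))) := by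
        refine (sum_le_card_nsmul _ _ _ fun J hJ => prob_existsEigenvector_nonsparse_le_of_half
          hj hn hg (mem_powersetCard_univ.1 hJ)).trans_eq ?_
        rw [card_powersetCard, card_univ, Fintype.card_fin, nsmul_eq_mul]
    _ ≤ 2 ^ n * (4 ^ n * (5 / j) ^ g * ((n + 1) * 2 ^ E) ^ (2 * (6 * (E + 1)))) := by
        gcongr
        exact_mod_cast n.choose_le_two_pow (n / 2)
    _ = 8 ^ n * (5 / j) ^ g * ((n + 1) * 2 ^ E) ^ (2 * (6 * (E + 1))) := by
        rw [← mul_assoc, ← mul_assoc, ← mul_pow]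
        norm_num

end Nonsparse

/-! ### Eigenvalue multiplicities of nested sign matrices -/

section Multiplicity

theorem card_filter_eigenvalues_le_finrank {ι : Type*} [Fintype ι] [DecidableEq ι]
    {A : Matrix ι ι ℝ} (hA : A.IsHermitian) (l : ℝ) :
    #{i | hA.eigenvalues i = l} ≤ Module.finrank ℝ (Module.End.eigenspace (toLin' A) l) := by
  let v (i : {i // hA.eigenvalues i = l}) : Module.End.eigenspace (toLin' A) l :=
    ⟨(hA.eigenvectorBasis i).ofLp, by
      rw [Module.End.mem_eigenspace_iff, toLin'_apply, hA.mulVec_eigenvectorBasis, i.2]⟩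
  have linearIndependent_ofLp :=
    (hA.eigenvectorBasis.orthonormal.linearIndependent.comp
      (Subtype.val : {i // hA.eigenvalues i = l} → ι) Subtype.val_injective).map'
      (WithLp.linearEquiv 2 ℝ (ι → ℝ)).toLinearMap (LinearEquiv.ker _)
  have linearIndependent_v : LinearIndependent ℝ v :=
    .of_comp (Submodule.subtype _) linearIndependent_ofLp
  rw [← Fintype.card_subtype]
  exact linearIndependent_v.fintype_card_le_finrank

theorem exists_two_le_finrank_eigenspace_of_not_squarefree {ι : Type*} [Fintype ι] [DecidableEq ι]
    {A : Matrix ι ι ℝ} (hA : A.IsHermitian) (h : ¬ Squarefree A.charpoly) :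
    ∃ l, 2 ≤ Module.finrank ℝ (Module.End.eigenspace (toLin' A) l) := by
  have not_injective : ¬ Function.Injective hA.eigenvalues := by
    contrapose! h
    rw [hA.charpoly_eq]
    exact (Polynomial.separable_prod_X_sub_C_iff.2 h).squarefree
  obtain ⟨i, j, hij, hne⟩ := Function.not_injective_iff.1 not_injective
  refine ⟨hA.eigenvalues j, le_trans ?_ (card_filter_eigenvalues_le_finrank hA _)⟩
  exact one_lt_card.2 ⟨i, by simpa using hij, j, by simp, hne⟩

theorem exists_finset_card_le_forall_hasEigenvalue {ι : Type*} [Fintype ι] [DecidableEq ι]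
    (A : Matrix ι ι ℝ) : ∃ S : Finset ℝ, #S ≤ Fintype.card ι ∧
      ∀ l, Module.End.HasEigenvalue (toLin' A) l → l ∈ S := by
  refine ⟨A.charpoly.roots.toFinset, ?_, fun l hl => ?_⟩
  · rw [← A.charpoly_natDegree_eq_dim]
    exact (Multiset.toFinset_card_le _).trans (Polynomial.card_roots' _)
  · rw [Module.End.hasEigenvalue_iff_isRoot_charpoly, charpoly_toLin'] at hl
    rwa [Multiset.mem_toFinset, Polynomial.mem_roots A.charpoly_monic.ne_zero]

variable {n : ℕ}

theorem isSymm_symMat (ω : Fin n → Fin n → Bool) : (symMat ℝ ω).IsSymm :=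
  IsSymm.ext fun i j => by simp [symMat, min_comm, max_comm]

/-- The eigenspace of `symMat ℝ ω` at `l`. -/
def signEigenspace (ω : Fin n → Fin n → Bool) (l : ℝ) : Submodule ℝ (Fin n → ℝ) :=
  Module.End.eigenspace (toLin' (symMat ℝ ω)) l

theorem mem_signEigenspace {ω : Fin n → Fin n → Bool} {l : ℝ} {v : Fin n → ℝ} :
    v ∈ signEigenspace ω l ↔ symMat ℝ ω *ᵥ v = l • v := by
  rw [signEigenspace, Module.End.mem_eigenspace_iff, toLin'_apply]

/-- The event that some eigenvalue of the sign matrix has multiplicity at least `k`. -/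
def HasEigenspaceOfDim (k : ℕ) (ω : Fin n → Fin n → Bool) : Prop :=
  ∃ l, k ≤ Module.finrank ℝ (signEigenspace ω l)

section Border

variable {ω : Fin n → Fin n → Bool} {x : Fin (n + 1) → Bool} {y : Fin n → Bool} {l : ℝ}
  {u : Fin (n + 1) → ℝ}

theorem symMat_mulVec_init_of_mem (hu : u ∈ signEigenspace (border ω x y) l) :
    (symMat ℝ ω *ᵥ fun i => u i.castSucc)
      = fun i => l * u i.castSucc - signb ℝ (x i.castSucc) * u (Fin.last n) := by
  funext i
  rw [eq_sub_iff_add_eq, ← symMat_border_mulVec_castSucc ω x y, mem_signEigenspace.1 hu,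
    Pi.smul_apply, smul_eq_mul]

theorem init_mem_of_last_eq_zero (hu : u ∈ signEigenspace (border ω x y) l)
    (h0 : u (Fin.last n) = 0) : (fun i => u i.castSucc) ∈ signEigenspace ω l ⊓
      LinearMap.ker (dotProductBilin ℝ ℝ fun i => signb ℝ (x i.castSucc)) := by
  refine ⟨mem_signEigenspace.2 ?_, ?_⟩
  · rw [symMat_mulVec_init_of_mem hu, h0]
    funext i
    simp
  · have last_row := symMat_border_mulVec_last ω x y u
    rw [mem_signEigenspace.1 hu, Fin.sum_univ_castSucc] at last_row
    simpa [h0, dotProduct] using last_row.symm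

theorem finrank_inf_ker_last_le :
    Module.finrank ℝ ↥(signEigenspace (border ω x y) l ⊓
        LinearMap.ker (LinearMap.proj (Fin.last n)))
      ≤ Module.finrank ℝ ↥(signEigenspace ω l ⊓
        LinearMap.ker (dotProductBilin ℝ ℝ fun i => signb ℝ (x i.castSucc))) := by
  let init : (Fin (n + 1) → ℝ) →ₗ[ℝ] (Fin n → ℝ) := LinearMap.funLeft ℝ ℝ Fin.castSucc
  refine LinearMap.finrank_le_finrank_of_injective (f := init.restrict
    fun u hu => init_mem_of_last_eq_zero hu.1 hu.2) fun u u' huu' => Subtype.ext ?_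
  funext i
  induction i using Fin.lastCases with
  | last => exact u.2.2.trans u'.2.2.symm
  | cast i => exact congrFun (congrArg Subtype.val huu') i

/-- Pair the leading block of the eigenvector equation for `u` with `v` and use symmetry. -/
theorem last_eq_zero_of_mem (hu : u ∈ signEigenspace (border ω x y) l) {v : Fin n → ℝ}
    (hv : v ∈ signEigenspace ω l) (hx : ∑ i, signb ℝ (x i.castSucc) * v i ≠ 0) :
    u (Fin.last n) = 0 := by
  refine (mul_eq_zero.1 ?_).resolve_left hx
  have pairing : v ⬝ᵥ (symMat ℝ ω *ᵥ fun i => u i.castSucc)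
      = (symMat ℝ ω *ᵥ v) ⬝ᵥ fun i => u i.castSucc := by
    rw [dotProduct_mulVec, ← mulVec_transpose, (isSymm_symMat ω).eq]
  rw [symMat_mulVec_init_of_mem hu, mem_signEigenspace.1 hv, ← sub_eq_zero, dotProduct,
    dotProduct, ← sum_sub_distrib] at pairing
  rw [sum_mul, ← neg_eq_zero, ← sum_neg_distrib, ← pairing]
  exact sum_congr rfl fun i _ => by rw [Pi.smul_apply, smul_eq_mul]; ring

/-- A generic last column splits every eigenspace, so multiplicities of the bordered matrix are
smaller than those of its leading block. -/
theorem HasEigenspaceOfDim.of_border {k : ℕ} (hk : 2 ≤ k)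
    (generic : ∀ l, Module.End.HasEigenvalue (toLin' (symMat ℝ ω)) l →
      ∃ v ∈ signEigenspace ω l, ∑ i, signb ℝ (x i.castSucc) * v i ≠ 0)
    (h : HasEigenspaceOfDim k (border ω x y)) : HasEigenspaceOfDim (k + 1) ω := by
  obtain ⟨l, hl⟩ := h
  refine ⟨l, ?_⟩
  have restrict_le := finrank_inf_ker_last_le (ω := ω) (x := x) (y := y) (l := l)
  by_cases hω : Module.End.HasEigenvalue (toLin' (symMat ℝ ω)) l
  · obtain ⟨v, hv, hxv⟩ := generic l hω
    have finrank_drop := finrank_inf_ker_add_one (signEigenspace ω l)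
      (dotProductBilin ℝ ℝ fun i => signb ℝ (x i.castSucc)) ⟨v, hv, hxv⟩
    have le_ker : signEigenspace (border ω x y) l ≤ LinearMap.ker (LinearMap.proj (Fin.last n)) :=
      fun u hu => last_eq_zero_of_mem hu hv hxv
    rw [inf_eq_left.2 le_ker] at restrict_le
    omega
  · have eq_bot : signEigenspace ω l = ⊥ := not_not.1 (mt Module.End.hasEigenvalue_iff.2 hω)
    have le_add_one := finrank_le_finrank_inf_ker_add_one (signEigenspace (border ω x y) l)
      (LinearMap.proj (Fin.last n))
    rw [eq_bot, bot_inf_eq, finrank_bot] at restrict_le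
    omega

end Border

theorem prob_orthogonal_eigenspace_le {ω : Fin n → Fin n → Bool} {ε : ℝ}
    (h : ¬ ExistsEigenvector (fun v => ε ≤ zeroProb (fun _ => 1 / 4) v) ω) (hε : 0 ≤ ε) :
    prob (fun x : Fin n → Bool => ∃ l, Module.End.HasEigenvalue (toLin' (symMat ℝ ω)) l ∧
      ∀ v ∈ signEigenspace ω l, ∑ i, signb ℝ (x i) * v i = 0) ≤ n * ε := by
  obtain ⟨S, hS, mem_S⟩ := exists_finset_card_le_forall_hasEigenvalue (symMat ℝ ω)
  rw [Fintype.card_fin] at hS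
  have prob_le (l : ℝ) : prob (fun x : Fin n → Bool =>
      Module.End.HasEigenvalue (toLin' (symMat ℝ ω)) l ∧
        ∀ v ∈ signEigenspace ω l, ∑ i, signb ℝ (x i) * v i = 0) ≤ ε := by
    by_cases hl : Module.End.HasEigenvalue (toLin' (symMat ℝ ω)) l
    · obtain ⟨v, hv⟩ := hl.exists_hasEigenvector
      have atom_lt : zeroProb (fun _ => 1 / 4) v < ε := by
        by_contra! hle
        exact h ⟨l, v, hv, hle⟩
      refine (prob_mono fun x hx => hx.2 v hv.1).trans
        ((prob_sum_signb_le_zeroProb v univ 0).trans (le_trans (le_of_eq ?_) atom_lt.le))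
      congr 1
      funext i
      simp [quarterOn]
    · exact (prob_eq_zero fun x hx => hl hx.1).trans_le hε
  calc _ ≤ prob (fun x : Fin n → Bool => ∃ l ∈ S,
          Module.End.HasEigenvalue (toLin' (symMat ℝ ω)) l ∧
            ∀ v ∈ signEigenspace ω l, ∑ i, signb ℝ (x i) * v i = 0) :=
        prob_mono fun x ⟨l, hl, hx⟩ => ⟨l, mem_S l hl, hl, hx⟩
    _ ≤ #S • ε := (prob_exists_mem_le _ _).trans (sum_le_card_nsmul _ _ _ fun l _ => prob_le l)
    _ ≤ n * ε := by
        rw [nsmul_eq_mul]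
        gcongr

theorem prob_border_eq (E : (Fin (n + 1) → Fin (n + 1) → Bool) → Prop) :
    prob (fun z : (Fin n → Fin n → Bool) × (Fin (n + 1) → Bool) × (Fin n → Bool) =>
      E (border z.1 z.2.1 z.2.2)) = prob E :=
  prob_comp_equiv ((Equiv.prodComm _ _).trans ((Equiv.prodAssoc _ _ _).trans (borderEquiv n))) E

theorem prob_le_of_border {E : (Fin (n + 1) → Fin (n + 1) → Bool) → Prop}
    {F : (Fin n → Fin n → Bool) → Prop} {G : (Fin n → Fin n → Bool) → (Fin n → Bool) → Prop}
    (cover : ∀ ω x y, E (border ω x y) → F ω ∨ G ω fun i => x i.castSucc) {δ : ℝ}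
    (hG : ∀ ω, prob (G ω) ≤ δ) : prob E ≤ prob F + δ := by
  let G' (ω : Fin n → Fin n → Bool) (z : (Fin (n + 1) → Bool) × (Fin n → Bool)) : Prop :=
    G ω fun i => z.1 i.castSucc
  have prob_G'_le (ω : Fin n → Fin n → Bool) : prob (G' ω) ≤ δ :=
    ((prob_fst fun x : Fin (n + 1) → Bool => G ω fun i => x i.castSucc).trans
      (prob_init (G ω))).trans_le (hG ω)
  calc prob E = _ := (prob_border_eq E).symm
    _ ≤ prob (fun z : (Fin n → Fin n → Bool) × (Fin (n + 1) → Bool) × (Fin n → Bool) =>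
          F z.1 ∨ G' z.1 z.2) := prob_mono fun z hz => cover z.1 z.2.1 z.2.2 hz
    _ ≤ _ + _ := prob_or_le _ _
    _ ≤ prob F + δ := add_le_add (prob_fst F).le (prob_prod_le_of_forall prob_G'_le)

theorem prob_hasEigenspaceOfDim_succ_le {k : ℕ} (hk : 2 ≤ k) {ε : ℝ} (hε : 0 ≤ ε) :
    prob (HasEigenspaceOfDim (n := n + 1) k) ≤ prob (HasEigenspaceOfDim (n := n) (k + 1))
      + (prob (ExistsEigenvector fun v : Fin n → ℝ => ε ≤ zeroProb (fun _ => 1 / 4) v)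
        + n * ε) := by
  set bad : (Fin n → Fin n → Bool) → Prop :=
    ExistsEigenvector fun v => ε ≤ zeroProb (fun _ => 1 / 4) v
  let orthogonal (ω : Fin n → Fin n → Bool) (x : Fin n → Bool) : Prop :=
    ∃ l, Module.End.HasEigenvalue (toLin' (symMat ℝ ω)) l ∧
      ∀ v ∈ signEigenspace ω l, ∑ i, signb ℝ (x i) * v i = 0
  have cover (ω : Fin n → Fin n → Bool) (x y) (h : HasEigenspaceOfDim k (border ω x y)) :
      (HasEigenspaceOfDim (k + 1) ω ∨ bad ω) ∨ ¬ bad ω ∧ orthogonal ω fun i => x i.castSucc := by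
    by_cases generic : ∀ l, Module.End.HasEigenvalue (toLin' (symMat ℝ ω)) l →
        ∃ v ∈ signEigenspace ω l, ∑ i, signb ℝ (x i.castSucc) * v i ≠ 0
    · exact .inl (.inl (.of_border hk generic h))
    · push Not at generic
      exact or_assoc.2 (.inr ((em _).imp_right fun hbad => ⟨hbad, generic⟩))
  have orthogonal_le (ω : Fin n → Fin n → Bool) :
      prob (fun x : Fin n → Bool => ¬ bad ω ∧ orthogonal ω x) ≤ n * ε := by
    by_cases hbad : bad ω
    · exact (prob_eq_zero fun z hz => hz.1 hbad).trans_le (by positivity)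
    · exact (prob_mono fun x hx => hx.2).trans (prob_orthogonal_eigenspace_le hbad hε)
  rw [← add_assoc]
  exact (prob_le_of_border cover orthogonal_le).trans (add_le_add_left (prob_or_le _ _) _)

theorem prob_hasEigenspaceOfDim_add_le {ε : ℝ} (hε : 0 ≤ ε) (t : ℕ) {k : ℕ} (hk : 2 ≤ k) :
    prob (HasEigenspaceOfDim (n := n + t) k) ≤ prob (HasEigenspaceOfDim (n := n) (k + t))
      + ∑ i ∈ range t, (prob (ExistsEigenvector
          fun v : Fin (n + i) → ℝ => ε ≤ zeroProb (fun _ => 1 / 4) v) + (n + i : ℕ) * ε) := by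
  induction t generalizing k with
  | zero => simp
  | succ t ih =>
    have step := prob_hasEigenspaceOfDim_succ_le (n := n + t) hk hε
    have ih_succ := ih (hk.trans k.le_succ)
    rw [Nat.succ_eq_add_one, add_assoc, add_comm 1] at ih_succ
    rw [sum_range_succ]
    exact step.trans (by linarith)

theorem prob_hasEigenspaceOfDim_two_le_sum {ε : ℝ} (hε : 0 ≤ ε) {t : ℕ} (h : n < 2 + t) :
    prob (HasEigenspaceOfDim (n := n + t) 2)
      ≤ ∑ i ∈ range t, (prob (ExistsEigenvector
          fun v : Fin (n + i) → ℝ => ε ≤ zeroProb (fun _ => 1 / 4) v) + (n + i : ℕ) * ε) := by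
  have dim_lt : prob (HasEigenspaceOfDim (n := n) (2 + t)) = 0 := by
    refine prob_eq_zero fun ω ⟨l, hl⟩ => ?_
    have finrank_le := (signEigenspace ω l).finrank_le
    rw [Module.finrank_fin_fun] at finrank_le
    omega
  simpa only [dim_lt, zero_add] using prob_hasEigenspaceOfDim_add_le (n := n) hε t le_rfl

theorem prob_hasEigenspaceOfDim_two_le {ε δ : ℝ} (hε : 0 ≤ ε)
    (hδ : ∀ m, n / 2 ≤ m → m < n → prob (ExistsEigenvector
      fun v : Fin m → ℝ => ε ≤ zeroProb (fun _ => 1 / 4) v) ≤ δ) :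
    prob (HasEigenspaceOfDim (n := n) 2) ≤ (n - n / 2 : ℕ) * (δ + n * ε) := by
  have walk := prob_hasEigenspaceOfDim_two_le_sum (n := n / 2) (t := n - n / 2) hε (by omega)
  rw [Nat.add_sub_cancel' (Nat.div_le_self n 2)] at walk
  refine walk.trans ((sum_le_card_nsmul _ _ (δ + n * ε) fun i hi => ?_).trans_eq ?_)
  · have lt_n : n / 2 + i < n := by
      have := mem_range.1 hi
      omega
    gcongr
    exact hδ _ (Nat.le_add_right _ _) lt_n
  · rw [card_range, nsmul_eq_mul]

theorem prob_not_squarefree_charpoly_le :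
    prob (fun ω : Fin n → Fin n → Bool => ¬ Squarefree (symMat ℝ ω).charpoly)
      ≤ prob (HasEigenspaceOfDim (n := n) 2) :=
  prob_mono fun ω h => exists_two_le_finrank_eigenspace_of_not_squarefree
    (isHermitian_iff_isSymm.2 (isSymm_symMat ω)) h

end Multiplicity

/-! ### Asymptotic bounds -/

section Asymptotics

theorem exp_neg_le_half_pow (E : ℕ) : Real.exp (-E) ≤ (1 / 2) ^ E := by
  rw [Real.exp_neg, one_div, inv_pow, ← Real.exp_one_pow]
  gcongr
  linarith [Real.add_one_le_exp 1]

theorem pow_le_exp_nat_mul {a b : ℝ} (ha : 0 ≤ a) (h : a ≤ Real.exp b) (k : ℕ) :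
    a ^ k ≤ Real.exp (k * b) := by
  rw [Real.exp_nat_mul]
  exact pow_le_pow_left₀ ha h k

/-- The scales attached to a large dimension `n`: `u = n ^ (1 / 10)`, `L = log n`, `r = √L` and
the exponent `x = n ^ (1 / 2) * L ^ (1 / 4)`, all characterized by algebraic identities. The
threshold `64000000` makes `r ≥ 8000`, so that `n * L` dominates the multiples of `n * r` and `n`
lost in the union bounds. -/
structure GrowthScales (n : ℕ) (u L r x : ℝ) : Prop where
  pow_u_eq : u ^ 10 = n
  exp_log_eq : Real.exp L = n
  le_log : 64000000 ≤ L
  log_le_u : L ≤ u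
  r_nonneg : 0 ≤ r
  r_sq : r ^ 2 = L
  x_nonneg : 0 ≤ x
  x_sq : x ^ 2 = n * r

namespace GrowthScales

variable {n m j E : ℕ} {u L r x : ℝ}

theorem log_nonneg (h : GrowthScales n u L r x) : 0 ≤ L := by linarith [h.le_log]

theorem le_u (h : GrowthScales n u L r x) : 64000000 ≤ u := h.le_log.trans h.log_le_u

theorem one_le_u (h : GrowthScales n u L r x) : 1 ≤ u := by linarith [h.le_u]

theorem u_nonneg (h : GrowthScales n u L r x) : 0 ≤ u := by linarith [h.le_u]

theorem one_le_pow (h : GrowthScales n u L r x) (k : ℕ) : 1 ≤ u ^ k := one_le_pow₀ h.one_le_u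

theorem pow_le_pow (h : GrowthScales n u L r x) {k l : ℕ} (hkl : k ≤ l) : u ^ k ≤ u ^ l :=
  pow_le_pow_right₀ h.one_le_u hkl

theorem mul_pow_nine_le (h : GrowthScales n u L r x) : 64000000 * u ^ 9 ≤ n := by
  rw [← h.pow_u_eq, pow_succ' u 9]
  exact mul_le_mul_of_nonneg_right h.le_u (by linarith [h.one_le_pow 9])

theorem le_r (h : GrowthScales n u L r x) : 8000 ≤ r := by
  rw [← pow_le_pow_iff_left₀ (by norm_num) h.r_nonneg two_ne_zero, h.r_sq]
  linarith [h.le_log]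

theorem mul_r_le_log (h : GrowthScales n u L r x) : 8000 * r ≤ L := by
  rw [← h.r_sq, sq]
  exact mul_le_mul_of_nonneg_right h.le_r h.r_nonneg

theorem x_le_pow_six (h : GrowthScales n u L r x) : x ≤ u ^ 6 := by
  rw [← pow_le_pow_iff_left₀ h.x_nonneg (by linarith [h.one_le_pow 6]) two_ne_zero, h.x_sq,
    ← h.pow_u_eq]
  calc u ^ 10 * r ≤ u ^ 10 * u := by
        have := h.one_le_pow 10
        gcongr
        linarith [h.mul_r_le_log, h.log_le_u, h.r_nonneg]
    _ = u ^ 11 := by ring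
    _ ≤ u ^ 12 := h.pow_le_pow (by norm_num)
    _ = (u ^ 6) ^ 2 := by ring

theorem pow_five_le_x (h : GrowthScales n u L r x) : u ^ 5 ≤ x := by
  rw [← pow_le_pow_iff_left₀ (by linarith [h.one_le_pow 5]) h.x_nonneg two_ne_zero, h.x_sq,
    ← pow_mul, h.pow_u_eq]
  exact le_mul_of_one_le_right n.cast_nonneg (by linarith [h.le_r])

theorem nat_add_one_mul_two_le (h : GrowthScales n u L r x) (hm : m ≤ n) :
    ((m : ℝ) + 1) * 2 ≤ Real.exp (2 * L) := by
  have hm' : (m : ℝ) ≤ n := by exact_mod_cast hm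
  have hn : 4 ≤ (n : ℝ) := by linarith [h.mul_pow_nine_le, h.one_le_pow 9]
  rw [two_mul L, Real.exp_add, h.exp_log_eq]
  nlinarith

theorem mul_blockLength_le (h : GrowthScales n u L r x) (hj : (j : ℝ) ≤ u) (hE : (E : ℝ) ≤ x) :
    16 * (32 * j ^ 3 * (E + 1)) ≤ n := by
  have u_nonneg := h.u_nonneg
  have real_le : (16 : ℝ) * (32 * (j : ℝ) ^ 3 * (E + 1)) ≤ n :=
    calc (16 : ℝ) * (32 * (j : ℝ) ^ 3 * (E + 1)) ≤ 16 * (32 * u ^ 3 * (u ^ 6 + 1)) := by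
          gcongr
          exact hE.trans h.x_le_pow_six
      _ = 512 * u ^ 9 + 512 * u ^ 3 := by ring
      _ ≤ 64000000 * u ^ 9 := by
          linarith [h.one_le_pow 9, h.pow_le_pow (show 3 ≤ 9 by norm_num)]
      _ ≤ n := h.mul_pow_nine_le
  exact_mod_cast real_le

theorem three_quarters_pow_le {s : ℕ} (hs : n ≤ 8 * s) :
    (3 / 4 : ℝ) ^ s ≤ Real.exp (-(n / 32)) := by
  refine (pow_le_exp_nat_mul (b := -(1 / 4)) (by norm_num) ?_ _).trans (Real.exp_le_exp.2 ?_)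
  · linarith [Real.add_one_le_exp (-(1 / 4) : ℝ)]
  · have : (n : ℝ) ≤ 8 * s := by exact_mod_cast hs
    linarith

theorem sparse_bound_le (h : GrowthScales n u L r x) (hm : m ≤ n) (hE : (E : ℝ) ≤ x) {k : ℕ}
    (hk : (k : ℝ) ≤ 16 * u ^ 3) (hkn : n ≤ 8 * (m - k)) :
    (m : ℝ) ^ k * (((m + 1) * 2) ^ (2 * k) * (3 / 4) ^ (m - k)) ≤ (1 / 2) ^ E := by
  have m_le_exp : (m : ℝ) ≤ Real.exp L := by
    rw [h.exp_log_eq]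
    exact_mod_cast hm
  calc (m : ℝ) ^ k * (((m + 1) * 2) ^ (2 * k) * (3 / 4) ^ (m - k))
      ≤ Real.exp (k * L) * (Real.exp ((2 * k : ℕ) * (2 * L)) * Real.exp (-(n / 32))) := by
        gcongr
        · exact pow_le_exp_nat_mul m.cast_nonneg m_le_exp k
        · exact pow_le_exp_nat_mul (by positivity) (h.nat_add_one_mul_two_le hm) _
        · exact three_quarters_pow_le hkn
    _ = Real.exp (5 * (k * L) - n / 32) := by
        rw [← Real.exp_add, ← Real.exp_add]
        push_cast
        ring_nf
    _ ≤ Real.exp (-E) := by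
        refine Real.exp_le_exp.2 ?_
        have kL_le : k * L ≤ 16 * u ^ 4 :=
          calc k * L ≤ 16 * u ^ 3 * u := mul_le_mul hk h.log_le_u h.log_nonneg (by
                linarith [h.one_le_pow 3])
            _ = 16 * u ^ 4 := by ring
        linarith [h.mul_pow_nine_le, h.one_le_pow 9, h.x_le_pow_six,
          h.pow_le_pow (show 4 ≤ 9 by norm_num), h.pow_le_pow (show 6 ≤ 9 by norm_num)]
    _ ≤ (1 / 2) ^ E := exp_neg_le_half_pow E

theorem exp_log_div_twenty_sq (h : GrowthScales n u L r x) : Real.exp (L / 20) ^ 2 = u := by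
  refine (pow_left_inj₀ (by positivity) h.u_nonneg (by norm_num : 10 ≠ 0)).1 ?_
  rw [← pow_mul, ← Real.exp_nat_mul, h.pow_u_eq, ← h.exp_log_eq]
  push_cast
  ring_nf

theorem five_div_le (h : GrowthScales n u L r x) (hj : u < j + 1) :
    5 / (j : ℝ) ≤ Real.exp (-(L / 20)) := by
  have exp_sq := h.exp_log_div_twenty_sq
  have exp_ge : 6 ≤ Real.exp (L / 20) := by
    rw [← pow_le_pow_iff_left₀ (by norm_num) (Real.exp_pos _).le two_ne_zero, exp_sq]
    linarith [h.le_u]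
  rw [Real.exp_neg, ← one_div, div_le_div_iff₀ (by linarith [h.le_u]) (Real.exp_pos _)]
  nlinarith

theorem five_div_pow_le (h : GrowthScales n u L r x) (hj : u < j + 1) :
    (5 / (j : ℝ)) ^ (n / 8) ≤ Real.exp (-(n * L / 320)) := by
  refine (pow_le_exp_nat_mul (by positivity) (h.five_div_le hj) _).trans (Real.exp_le_exp.2 ?_)
  have hn : 8 ≤ n := by
    have : (8 : ℝ) ≤ n := by linarith [h.mul_pow_nine_le, h.one_le_pow 9]
    exact_mod_cast this
  have n_le : (n : ℝ) ≤ 16 * (n / 8 : ℕ) := by exact_mod_cast (by omega : n ≤ 16 * (n / 8))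
  linarith [mul_le_mul_of_nonneg_right n_le h.log_nonneg]

theorem netSize_pow_le (h : GrowthScales n u L r x) (hm : m ≤ n) (hE : (E : ℝ) ≤ x) :
    (((m : ℝ) + 1) * 2 ^ E) ^ (2 * (6 * (E + 1))) ≤ Real.exp (n + 24 * (n * r)) := by
  have base_le : ((m : ℝ) + 1) * 2 ^ E ≤ Real.exp (2 * L + E) := by
    rw [Real.exp_add, ← Real.exp_one_pow]
    gcongr
    · linarith [h.nat_add_one_mul_two_le hm, m.cast_nonneg (α := ℝ)]
    · linarith [Real.add_one_le_exp 1]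
  refine (pow_le_exp_nat_mul (by positivity) base_le _).trans (Real.exp_le_exp.2 ?_)
  have one_le_x : 1 ≤ x := (h.one_le_pow 5).trans h.pow_five_le_x
  have xL_le : x * L ≤ u ^ 7 := by
    rw [pow_succ u 6]
    exact mul_le_mul h.x_le_pow_six h.log_le_u h.log_nonneg (by linarith [h.one_le_pow 6])
  have L_nonneg := h.log_nonneg
  calc ((2 * (6 * (E + 1)) : ℕ) : ℝ) * (2 * L + E) ≤ 2 * (6 * (2 * x)) * (2 * L + x) := by
        push_cast
        gcongr
        linarith
    _ = 48 * (x * L) + 24 * x ^ 2 := by ring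
    _ ≤ n + 24 * (n * r) := by
        rw [h.x_sq]
        linarith [h.mul_pow_nine_le, h.one_le_pow 9, h.pow_le_pow (show 7 ≤ 9 by norm_num)]

theorem eight_pow_le (hm : m ≤ n) : (8 : ℝ) ^ m ≤ Real.exp (3 * n) := by
  have eight_le : (8 : ℝ) ≤ Real.exp 3 := by
    have exp_three : Real.exp 3 = Real.exp 1 ^ 3 := by rw [Real.exp_one_pow]; norm_num
    rw [exp_three]
    calc (8 : ℝ) = 2 ^ 3 := by norm_num
      _ ≤ Real.exp 1 ^ 3 := by
          gcongr
          linarith [Real.add_one_le_exp 1]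
  have hm' : (m : ℝ) ≤ n := by exact_mod_cast hm
  exact (pow_le_exp_nat_mul (by norm_num) eight_le m).trans (Real.exp_le_exp.2 (by linarith))

theorem nonsparse_bound_le (h : GrowthScales n u L r x) (hm : m ≤ n) (hj : u < j + 1)
    (hE : (E : ℝ) ≤ x) :
    8 ^ m * (5 / (j : ℝ)) ^ (n / 8) * ((m + 1) * 2 ^ E) ^ (2 * (6 * (E + 1))) ≤ (1 / 2) ^ E :=
  calc 8 ^ m * (5 / (j : ℝ)) ^ (n / 8) * ((m + 1) * 2 ^ E) ^ (2 * (6 * (E + 1)))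
      ≤ Real.exp (3 * n) * Real.exp (-(n * L / 320)) * Real.exp (n + 24 * (n * r)) := by
        gcongr
        · exact eight_pow_le hm
        · exact h.five_div_pow_le hj
        · exact h.netSize_pow_le hm hE
    _ = Real.exp (4 * n + 24 * (n * r) - n * L / 320) := by
        rw [← Real.exp_add, ← Real.exp_add]
        ring_nf
    _ ≤ Real.exp (-E) := by
        have E_le : (E : ℝ) ≤ n :=
          (hE.trans h.x_le_pow_six).trans ((h.pow_le_pow (by norm_num)).trans_eq h.pow_u_eq)
        have nr_le : (n : ℝ) * (8000 * r) ≤ n * L :=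
          mul_le_mul_of_nonneg_left h.mul_r_le_log n.cast_nonneg
        have n_le : (n : ℝ) * 8000 ≤ n * r := mul_le_mul_of_nonneg_left h.le_r n.cast_nonneg
        refine Real.exp_le_exp.2 ?_
        linarith
    _ ≤ (1 / 2) ^ E := exp_neg_le_half_pow E

theorem prob_existsEigenvector_le (h : GrowthScales n u L r x) (hj : (j : ℝ) ≤ u)
    (hj' : u < j + 1) (hE : (E : ℝ) ≤ x) (hm : n / 2 ≤ m) (hmn : m ≤ n) :
    prob (ExistsEigenvector fun v : Fin m → ℝ => (1 / 2) ^ E ≤ zeroProb (fun _ => 1 / 4) v)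
      ≤ 2 * (1 / 2) ^ E := by
  have five_le_j : 5 ≤ j := by
    have : (5 : ℝ) ≤ j := by linarith [h.le_u]
    exact_mod_cast this
  have one_le_cube : 1 ≤ j ^ 3 := Nat.one_le_pow _ _ (by omega)
  have block_le := h.mul_blockLength_le hj hE
  have six_le : 6 * (E + 1) ≤ 32 * j ^ 3 * (E + 1) := Nat.mul_le_mul_right _ (by omega)
  have cube_le : 32 * j ^ 3 ≤ 32 * j ^ 3 * (E + 1) := Nat.le_mul_of_pos_right _ E.succ_pos
  have support_le : ((16 * j ^ 3 : ℕ) : ℝ) ≤ 16 * u ^ 3 := by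
    push_cast
    gcongr
  have sparse := (prob_existsEigenvector_card_support_le (n := m) (k := 16 * j ^ 3)
    (by omega)).trans (h.sparse_bound_le hmn hE support_le (by omega))
  have nonsparse := (prob_existsEigenvector_nonsparse_le (n := m) (g := n / 8) (E := E) five_le_j
    (by omega) (by omega)).trans (h.nonsparse_bound_le hmn hj' hE)
  rw [two_mul]
  refine (prob_mono fun ω ⟨l, v, hv, large⟩ => ?_).trans
    ((prob_or_le _ _).trans (add_le_add sparse nonsparse))
  rcases le_or_gt #{i | v i ≠ 0} (16 * j ^ 3) with few | many
  · exact .inl ⟨l, v, hv, few⟩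
  · exact .inr ⟨l, v, hv, large, many⟩

theorem mul_half_pow_le (h : GrowthScales n u L r x) (hE : x < E + 1) :
    n * (2 + n) * (1 / 2) ^ E ≤ Real.exp (-(1 / 4) * x) := by
  have four_le_n : 4 ≤ (n : ℝ) := by linarith [h.mul_pow_nine_le, h.one_le_pow 9]
  have polynomial_le : (n : ℝ) * (2 + n) ≤ Real.exp (3 * L) :=
    calc (n : ℝ) * (2 + n) ≤ n * (n * n) := by
          gcongr
          nlinarith
      _ = Real.exp L ^ 3 := by
          rw [h.exp_log_eq]
          ring
      _ = Real.exp (3 * L) := (Real.exp_nat_mul L 3).symm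
  have half_le : (1 / 2 : ℝ) ≤ Real.exp (-(1 / 2)) := by
    linarith [Real.add_one_le_exp (-(1 / 2) : ℝ)]
  have u_le_x : 64000000 * u ≤ x :=
    calc 64000000 * u ≤ u ^ 4 * u := by
          have := h.one_le_u
          gcongr
          exact h.le_u.trans (le_self_pow₀ this (by norm_num))
      _ = u ^ 5 := by ring
      _ ≤ x := h.pow_five_le_x
  calc (n : ℝ) * (2 + n) * (1 / 2) ^ E ≤ Real.exp (3 * L) * Real.exp (E * -(1 / 2)) := by
        gcongr
        exact pow_le_exp_nat_mul (by norm_num) half_le E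
    _ = Real.exp (3 * L + E * -(1 / 2)) := (Real.exp_add _ _).symm
    _ ≤ Real.exp (-(1 / 4) * x) := Real.exp_le_exp.2 (by linarith [h.log_le_u, h.le_u])

theorem prob_hasEigenspaceOfDim_two_le_exp (h : GrowthScales n u L r x) :
    prob (HasEigenspaceOfDim (n := n) 2) ≤ Real.exp (-(1 / 4) * x) := by
  calc prob (HasEigenspaceOfDim (n := n) 2)
      ≤ (n - n / 2 : ℕ) * (2 * (1 / 2) ^ ⌊x⌋₊ + n * (1 / 2) ^ ⌊x⌋₊) :=
        prob_hasEigenspaceOfDim_two_le (by positivity) fun m hm hmn =>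
          h.prob_existsEigenvector_le (Nat.floor_le h.u_nonneg) (Nat.lt_floor_add_one u)
            (Nat.floor_le h.x_nonneg) hm hmn.le
    _ ≤ n * (2 * (1 / 2) ^ ⌊x⌋₊ + n * (1 / 2) ^ ⌊x⌋₊) := by
        gcongr
        exact n.sub_le _
    _ = n * (2 + n) * (1 / 2) ^ ⌊x⌋₊ := by ring
    _ ≤ Real.exp (-(1 / 4) * x) := h.mul_half_pow_le (Nat.lt_floor_add_one x)

end GrowthScales

theorem eventually_growthScales : ∀ᶠ n : ℕ in Filter.atTop,
    GrowthScales n (n ^ (1 / 10 : ℝ)) (Real.log n) √(Real.log n)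
      (n ^ (1 / 2 : ℝ) * Real.log n ^ (1 / 4 : ℝ)) := by
  have log_large : ∀ᶠ n : ℕ in Filter.atTop, (64000000 : ℝ) ≤ Real.log n :=
    (Real.tendsto_log_atTop.comp tendsto_natCast_atTop_atTop).eventually_ge_atTop _
  have log_le_rpow := tendsto_natCast_atTop_atTop (R := ℝ) |>.eventually
    ((isLittleO_log_rpow_atTop (show (0 : ℝ) < 1 / 10 by norm_num)).bound one_pos)
  filter_upwards [log_large, log_le_rpow, Filter.eventually_ge_atTop 1]
    with n le_log log_le one_le_n
  have n_pos : (0 : ℝ) < n := by exact_mod_cast one_le_n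
  have log_nonneg : 0 ≤ Real.log n := by linarith
  rw [one_mul, Real.norm_of_nonneg log_nonneg, Real.norm_of_nonneg (by positivity)] at log_le
  refine ⟨?_, Real.exp_log n_pos, le_log, log_le, Real.sqrt_nonneg _, Real.sq_sqrt log_nonneg,
    by positivity, ?_⟩
  · rw [← Real.rpow_mul_natCast n_pos.le]
    norm_num
  · rw [mul_pow, ← Real.rpow_mul_natCast n_pos.le, ← Real.rpow_mul_natCast log_nonneg,
      Real.sqrt_eq_rpow]
    norm_num

end Asymptotics

/-- A random symmetric Rademacher matrix has simple spectrum (equivalently, a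
squarefree characteristic polynomial over `ℝ`) with probability at least
`1 - exp(-c n^{1/2} (log n)^{1/4})`. -/
theorem simple_spectrum_symmetric_rademacher :
    ∃ c : ℝ, 0 < c ∧ ∃ n₀ : ℕ, ∀ n : ℕ, n₀ ≤ n →
      prob (fun ω : Fin n → Fin n → Bool =>
          Squarefree (Matrix.charpoly (symMat ℝ ω)))
        ≥ 1 - Real.exp (-c * (n : ℝ) ^ ((1 : ℝ) / 2) * Real.log n ^ ((1 : ℝ) / 4)) := by
  obtain ⟨n₀, hn₀⟩ := Filter.eventually_atTop.1 eventually_growthScales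
  refine ⟨1 / 4, by norm_num, n₀, fun n hn => ?_⟩
  have not_simple_le := prob_not_squarefree_charpoly_le.trans
    (hn₀ n hn).prob_hasEigenspaceOfDim_two_le_exp
  rw [prob_not] at not_simple_le
  rw [mul_assoc]
  linarith
end
end
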